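/- Let ψ : ℕ → (0,∞) be a non-decreasing function and suppose liminf_{n→∞} (log ψ(n))/n = log B for some real 1 < B < ∞. Let E(ψ) = { x ∈ (0,1) irrational : for infinitely many n ∈ ℕ there exist indices 1 ≤ k ≠ l ≤ n with a_k(x) ≥ ψ(n) and a_l(x) ≥ ψ(n) }. Then dim_H E(ψ) = inf{ s ≥ 0 : limsup_{n→∞} (1/n)·log Σ_{(a_1,…,a_n) ∈ (ℕ≥1)^n} B^{−n(3s−1)}·q_n(a_1,…,a_n)^{−2s} ≤ 0 } (the limsup taken in the extended reals), i.e. the dimension equals inf{ s ≥ 0 : P(T, −(3s−1)·log B − s·log|T′|) ≤ 0 }. -/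

import Mathlib

open Filter MeasureTheory Set


/-- The Gauss map `T(x) = 1/x - ⌊1/x⌋`. -/
noncomputable def gaussMap (x : ℝ) : ℝ := 1 / x - (⌊1 / x⌋ : ℤ)

/-- The `n`-th partial quotient `a_n(x)` (for `n ≥ 1`) of the continued
fraction expansion of `x`: `a_n(x) = ⌊1 / T^{n-1}(x)⌋`. -/
noncomputable def pq (x : ℝ) (n : ℕ) : ℕ := ⌊1 / (gaussMap^[n - 1] x)⌋₊

/-- The continuant `q_n(a_1, …, a_n)`: `q_0 = 1`, `q_1 = a_1`,
`q_k = a_k q_{k-1} + q_{k-2}`. -/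
def contQ : (n : ℕ) → (Fin n → ℕ) → ℕ
  | 0, _ => 1
  | 1, a => a 0
  | (n + 2), a =>
      a (Fin.last (n + 1)) * contQ (n + 1) (Fin.init a) +
        contQ n (Fin.init (Fin.init a))

/-- `s_B`: the Wang–Wu pressure exponent. -/
noncomputable def sExp (B : ℝ) : ℝ :=
  sInf {s : ℝ | 0 ≤ s ∧
    Filter.atTop.limsup (fun n : ℕ =>
      (((n : ℝ)⁻¹ : ℝ) : EReal) * ENNReal.log (∑' a : Fin n → ℕ+,
        ENNReal.ofReal ((B ^ n * ((contQ n fun i => (a i : ℕ)) : ℝ) ^ 2) ^ (-s)))) ≤ 0}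

/-- `g_{B₁,B₂}`: the two-parameter pressure exponent. -/
noncomputable def gExp (B₁ B₂ : ℝ) : ℝ :=
  sInf {s : ℝ | 0 ≤ s ∧
    Filter.atTop.limsup (fun n : ℕ =>
      (((n : ℝ)⁻¹ : ℝ) : EReal) * ENNReal.log (∑' a : Fin n → ℕ+,
        ENNReal.ofReal (B₂ ^ ((1 - s) * (n : ℝ)) *
          (B₁ ^ n * ((contQ n fun i => (a i : ℕ)) : ℝ) ^ 2) ^ (-s)))) ≤ 0}

/-! ### Continued fraction algebra on lists -/

/-- The linear recursion behind numerators and denominators. -/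
def cK (x0 : ℕ × ℕ) : List ℕ → ℕ × ℕ
  | [] => x0
  | a :: w => ((cK x0 w).2, a * (cK x0 w).2 + (cK x0 w).1)

/-- numerator -/
def cP (w : List ℕ) : ℕ := (cK (0, 1) w).1
/-- denominator -/
def cQ (w : List ℕ) : ℕ := (cK (0, 1) w).2
/-- previous numerator -/
def cP' (w : List ℕ) : ℕ := (cK (1, 0) w).1
/-- previous denominator -/
def cQ' (w : List ℕ) : ℕ := (cK (1, 0) w).2

theorem cP_nil : cP [] = 0 := rfl
theorem cQ_nil : cQ [] = 1 := rfl
theorem cP'_nil : cP' [] = 1 := rfl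
theorem cQ'_nil : cQ' [] = 0 := rfl
theorem cP_cons (a : ℕ) (w : List ℕ) : cP (a :: w) = cQ w := rfl
theorem cP'_cons (a : ℕ) (w : List ℕ) : cP' (a :: w) = cQ' w := rfl
theorem cQ_cons (a : ℕ) (w : List ℕ) : cQ (a :: w) = a * cQ w + cP w := rfl
theorem cQ'_cons (a : ℕ) (w : List ℕ) : cQ' (a :: w) = a * cQ' w + cP' w := rfl

theorem cPQ_append (u v : List ℕ) :
    cP (u ++ v) = cP u * cQ v + cP' u * cP v ∧ cQ (u ++ v) = cQ u * cQ v + cQ' u * cP v := by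
  induction u with
  | nil => simp [cP_nil, cQ_nil, cP'_nil, cQ'_nil]
  | cons a u ih =>
    simp only [List.cons_append, cP_cons, cQ_cons, cP'_cons, cQ'_cons, ih.1, ih.2]
    exact ⟨trivial, by ring⟩

theorem cPQ'_append (u v : List ℕ) :
    cP' (u ++ v) = cP u * cQ' v + cP' u * cP' v ∧
      cQ' (u ++ v) = cQ u * cQ' v + cQ' u * cP' v := by
  induction u with
  | nil => simp [cP_nil, cQ_nil, cP'_nil, cQ'_nil]
  | cons a u ih =>
    simp only [List.cons_append, cP_cons, cQ_cons, cP'_cons, cQ'_cons, ih.1, ih.2]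
    exact ⟨trivial, by ring⟩

theorem cQ_concat (u : List ℕ) (a : ℕ) : cQ (u ++ [a]) = a * cQ u + cQ' u := by
  rw [(cPQ_append u [a]).2]; simp [cP_nil, cQ_nil, cP_cons, cQ_cons]; ring

theorem cQ'_concat (u : List ℕ) (a : ℕ) : cQ' (u ++ [a]) = cQ u := by
  rw [(cPQ'_append u [a]).2]; simp [cP'_nil, cQ'_nil, cP'_cons, cQ'_cons]

theorem contQ_eq : ∀ (n : ℕ) (a : Fin n → ℕ), contQ n a = cQ (List.ofFn a)
  | 0, a => by simp [contQ, cQ_nil]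
  | 1, a => by simp [contQ, cQ_nil, cQ_cons, cP_nil]
  | (n + 2), a => by
    have h1 := contQ_eq (n + 1) (Fin.init a)
    have h2 := contQ_eq n (Fin.init (Fin.init a))
    rw [contQ, h1, h2, List.ofFn_succ_last (f := a), cQ_concat]
    have : List.ofFn (Fin.init a) = List.ofFn (Fin.init (Fin.init a)) ++ [a (Fin.last n).castSucc] := by
      rw [List.ofFn_succ_last]; rfl
    change _ = _ * cQ (List.ofFn (Fin.init a)) + cQ' (List.ofFn (Fin.init a))
    rw [this, cQ'_concat]

theorem cP_le_cQ (w : List ℕ) (hw : ∀ a ∈ w, 1 ≤ a) : cP w ≤ cQ w := by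
  cases w with
  | nil => simp [cP_nil, cQ_nil]
  | cons a w =>
    have : 1 ≤ a := hw a (by simp)
    rw [cP_cons, cQ_cons]; nlinarith

theorem cQ_pos (w : List ℕ) (hw : ∀ a ∈ w, 1 ≤ a) : 1 ≤ cQ w := by
  induction w with
  | nil => simp [cQ_nil]
  | cons a w ih =>
    have : 1 ≤ a := hw a (by simp)
    have := ih (fun b hb => hw b (by simp [hb]))
    rw [cQ_cons]; nlinarith

theorem cQ'_le_aux (w : List ℕ) (hw : ∀ a ∈ w, 1 ≤ a) :
    cQ' w ≤ cQ w ∧ cP' w + cQ' w ≤ cP w + cQ w := by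
  induction w with
  | nil => simp [cP_nil, cQ_nil, cP'_nil, cQ'_nil]
  | cons a w ih =>
    have h1 : 1 ≤ a := hw a (by simp)
    have := ih (fun b hb => hw b (by simp [hb]))
    rw [cQ_cons, cQ'_cons, cP_cons, cP'_cons]
    obtain ⟨c, rfl⟩ := Nat.exists_eq_add_of_le h1
    constructor <;> nlinarith [Nat.mul_le_mul_left c this.1]

theorem cQ'_le (w : List ℕ) (hw : ∀ a ∈ w, 1 ≤ a) : cQ' w ≤ cQ w := (cQ'_le_aux w hw).1

theorem cQ_append_le (u v : List ℕ) (hu : ∀ a ∈ u, 1 ≤ a) (hv : ∀ a ∈ v, 1 ≤ a) :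
    cQ (u ++ v) ≤ 2 * (cQ u * cQ v) := by
  rw [(cPQ_append u v).2]
  have := Nat.mul_le_mul (cQ'_le u hu) (cP_le_cQ v hv)
  linarith

theorem le_cQ_append (u v : List ℕ) : cQ u * cQ v ≤ cQ (u ++ v) := by
  rw [(cPQ_append u v).2]; exact Nat.le_add_right _ _

theorem length_le_cQ (w : List ℕ) (hw : ∀ a ∈ w, 1 ≤ a) : w.length ≤ cQ w := by
  induction w with
  | nil => simp
  | cons a w ih =>
    have h1 : 1 ≤ a := hw a (by simp)
    have hw' : ∀ b ∈ w, 1 ≤ b := fun b hb => hw b (by simp [hb])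
    have h2 := ih hw'
    rw [cQ_cons, List.length_cons]
    cases w with
    | nil => simp [cQ_nil]; omega
    | cons b w =>
      have : 1 ≤ cP (b :: w) := by
        rw [cP_cons]; exact cQ_pos w (fun c hc => hw' c (by simp [hc]))
      nlinarith [cQ_pos (b :: w) hw']

theorem cDet (w : List ℕ) :
    |((cP' w : ℝ) * cQ w - cP w * cQ' w)| = 1 := by
  induction w with
  | nil => simp [cP_nil, cQ_nil, cP'_nil, cQ'_nil]
  | cons a w ih =>
    rw [cQ_cons, cQ'_cons, cP_cons, cP'_cons, ← ih, ← abs_neg]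
    congr 1
    push_cast; ring

/-- The inverse branch of the Gauss map along a word. -/
noncomputable def phi : List ℕ → ℝ → ℝ
  | [], t => t
  | a :: w, t => 1 / ((a : ℝ) + phi w t)

theorem phi_den_pos (w : List ℕ) (hw : ∀ a ∈ w, 1 ≤ a) (t : ℝ) (ht : 0 ≤ t) :
    0 < (cQ' w : ℝ) * t + cQ w := by
  have : (1 : ℝ) ≤ cQ w := by exact_mod_cast cQ_pos w hw
  positivity

theorem phi_eq (w : List ℕ) (hw : ∀ a ∈ w, 1 ≤ a) (t : ℝ) (ht : 0 ≤ t) :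
    phi w t = (cP' w * t + cP w) / (cQ' w * t + cQ w) := by
  induction w with
  | nil => simp [cP_nil, cQ_nil, cP'_nil, cQ'_nil, phi]
  | cons a w ih =>
    have hw' : ∀ b ∈ w, 1 ≤ b := fun b hb => hw b (by simp [hb])
    have h := phi_den_pos w hw' t ht
    have h2 := phi_den_pos (a :: w) hw t ht
    rw [phi, ih hw', cQ_cons, cQ'_cons, cP_cons, cP'_cons]
    rw [cQ_cons, cQ'_cons] at h2
    push_cast at h2 ⊢
    have : (a : ℝ) + (cP' w * t + cP w) / (cQ' w * t + cQ w)
        = ((a * cQ' w + cP' w) * t + (a * cQ w + cP w)) / (cQ' w * t + cQ w) := by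
      rw [eq_div_iff h.ne', add_mul, div_mul_cancel₀ _ h.ne']; ring
    rw [this, one_div_div]

theorem phi_sub (w : List ℕ) (hw : ∀ a ∈ w, 1 ≤ a) (t t' : ℝ) (ht : 0 ≤ t) (ht' : 0 ≤ t') :
    |phi w t - phi w t'| = |t - t'| / ((cQ' w * t + cQ w) * (cQ' w * t' + cQ w)) := by
  have h := phi_den_pos w hw t ht
  have h' := phi_den_pos w hw t' ht'
  rw [phi_eq w hw t ht, phi_eq w hw t' ht', div_sub_div _ _ h.ne' h'.ne', abs_div,
    abs_of_pos (mul_pos h h')]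
  congr 1
  rw [← one_mul |t - t'|, ← cDet w, ← abs_mul]
  congr 1; ring

theorem phi_sub_le (w : List ℕ) (hw : ∀ a ∈ w, 1 ≤ a) (t t' : ℝ) (ht : 0 ≤ t) (ht' : 0 ≤ t') :
    |phi w t - phi w t'| ≤ |t - t'| / (cQ w : ℝ) ^ 2 := by
  rw [phi_sub w hw t t' ht ht']
  have : (1 : ℝ) ≤ cQ w := by exact_mod_cast cQ_pos w hw
  gcongr
  rw [sq]; gcongr
  · have : 0 ≤ (cQ' w : ℝ) * t := by positivity
    linarith
  · have : 0 ≤ (cQ' w : ℝ) * t' := by positivity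
    linarith

theorem phi_nonneg (w : List ℕ) (hw : ∀ a ∈ w, 1 ≤ a) (t : ℝ) (ht : 0 ≤ t) : 0 ≤ phi w t := by
  rw [phi_eq w hw t ht]; positivity

theorem phi_append (u v : List ℕ) (t : ℝ) : phi (u ++ v) t = phi u (phi v t) := by
  induction u with
  | nil => rfl
  | cons a u ih => simp [phi, ih]

/-! ### Irrational points and the Gauss map -/

theorem gauss_mem {x : ℝ} (hx : x ∈ Ioo (0 : ℝ) 1) (hi : Irrational x) :
    gaussMap x ∈ Ioo (0 : ℝ) 1 ∧ Irrational (gaussMap x) ∧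
      1 ≤ ⌊1 / x⌋₊ ∧ x = 1 / ((⌊1 / x⌋₊ : ℝ) + gaussMap x) := by
  have hi' : Irrational (1 / x) := by rw [one_div]; exact hi.inv
  have h0 : (1 : ℝ) ≤ 1 / x := by
    rw [le_div_iff₀ hx.1]; linarith [hx.2]
  have hg : Irrational (gaussMap x) := hi'.sub_intCast _
  have hf : gaussMap x = Int.fract (1 / x) := rfl
  have hfl : ((⌊1 / x⌋₊ : ℕ) : ℝ) = ((⌊1 / x⌋ : ℤ) : ℝ) := by
    rw [natCast_floor_eq_intCast_floor (by linarith)]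
  refine ⟨⟨lt_of_le_of_ne (by rw [hf]; exact Int.fract_nonneg _) (hg.ne_zero).symm,
    by rw [hf]; exact Int.fract_lt_one _⟩, hg, Nat.le_floor (by simpa using h0), ?_⟩
  rw [hfl, gaussMap, add_sub_cancel, one_div_one_div]

theorem gauss_iter {x : ℝ} (hx : x ∈ Ioo (0 : ℝ) 1) (hi : Irrational x) (n : ℕ) :
    gaussMap^[n] x ∈ Ioo (0 : ℝ) 1 ∧ Irrational (gaussMap^[n] x) := by
  induction n with
  | zero => exact ⟨hx, hi⟩
  | succ n ih =>
    rw [Function.iterate_succ_apply']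
    have := gauss_mem ih.1 ih.2
    exact ⟨this.1, this.2.1⟩

theorem pq_pos {x : ℝ} (hx : x ∈ Ioo (0 : ℝ) 1) (hi : Irrational x) (n : ℕ) : 1 ≤ pq x n :=
  (gauss_mem (gauss_iter hx hi _).1 (gauss_iter hx hi _).2).2.2.1

theorem eq_phi {x : ℝ} (hx : x ∈ Ioo (0 : ℝ) 1) (hi : Irrational x) (n : ℕ) :
    x = phi ((List.range n).map (fun i => pq x (i + 1))) (gaussMap^[n] x) := by
  induction n with
  | zero => rfl
  | succ n ih =>
    rw [List.range_succ, List.map_append, phi_append]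
    have := (gauss_mem (gauss_iter hx hi n).1 (gauss_iter hx hi n).2).2.2.2
    simp only [List.map_cons, List.map_nil, phi, Function.iterate_succ_apply']
    rw [pq, Nat.add_sub_cancel, ← this]; exact ih

/-! ### Points with prescribed digits -/

/-- The list of the first `n` digits. -/
def pre (a : ℕ → ℕ) (n : ℕ) : List ℕ := (List.range n).map a

theorem pre_pos {a : ℕ → ℕ} (ha : ∀ n, 1 ≤ a n) (n : ℕ) : ∀ b ∈ pre a n, 1 ≤ b := by
  intro b hb; simp only [pre, List.mem_map] at hb; obtain ⟨i, _, rfl⟩ := hb; exact ha i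

theorem pre_add (a : ℕ → ℕ) (m n : ℕ) : pre a (m + n) = pre a m ++ pre (fun i => a (m + i)) n := by
  simp [pre, List.range_add, Function.comp_def]

theorem pre_succ' (a : ℕ → ℕ) (n : ℕ) : pre a (n + 1) = a 0 :: pre (fun i => a (i + 1)) n := by
  rw [add_comm, pre_add]; simp [pre, add_comm]

theorem pre_length (a : ℕ → ℕ) (n : ℕ) : (pre a n).length = n := by simp [pre]

theorem pre_congr {a b : ℕ → ℕ} {n : ℕ} (h : ∀ i < n, a i = b i) : pre a n = pre b n := by
  simp only [pre]; apply List.map_congr_left; intro i hi; exact h i (List.mem_range.1 hi)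

theorem pre_ofFn (a : ℕ → ℕ) (n : ℕ) : pre a n = List.ofFn (fun i : Fin n => a i) := by
  rw [pre, List.ofFn_eq_map, ← List.map_coe_finRange_eq_range, List.map_map]; rfl

/-- The continued fraction with digits `a`. -/
noncomputable def cf (a : ℕ → ℕ) : ℝ := limUnder atTop (fun n => phi (pre a n) 0)

theorem cf_tendsto {a : ℕ → ℕ} (ha : ∀ n, 1 ≤ a n) :
    Tendsto (fun n => phi (pre a n) 0) atTop (nhds (cf a)) := by
  apply CauchySeq.tendsto_limUnder
  have key : ∀ N n : ℕ, N ≤ n → phi (pre a n) 0 ∈ Set.Icc (0 : ℝ) 1 ∧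
      ∃ t ∈ Set.Icc (0 : ℝ) 1, phi (pre a n) 0 = phi (pre a N) t := by
    have h01 : ∀ (b : ℕ → ℕ), (∀ n, 1 ≤ b n) → ∀ n, phi (pre b n) 0 ∈ Set.Icc (0 : ℝ) 1 := by
      intro b hb n
      refine ⟨phi_nonneg _ (pre_pos hb n) _ le_rfl, ?_⟩
      rw [phi_eq _ (pre_pos hb n) _ le_rfl]
      simp only [mul_zero, zero_add]
      apply div_le_one_of_le₀ _ (by positivity)
      exact_mod_cast cP_le_cQ _ (pre_pos hb n)
    intro N n hNn
    refine ⟨h01 a ha n, ?_⟩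
    obtain ⟨k, rfl⟩ := Nat.exists_eq_add_of_le hNn
    exact ⟨_, h01 (fun i => a (N + i)) (fun i => ha _) k, by rw [pre_add, phi_append]⟩
  refine cauchySeq_of_le_tendsto_0 (fun N : ℕ => 2 * (1 / ((N : ℝ) + 1))) ?_ ?_
  · intro n m N hn hm
    obtain ⟨h1, t, ht, e⟩ := key N n hn
    obtain ⟨h2, t', ht', e'⟩ := key N m hm
    rw [Real.dist_eq, e, e']
    refine (phi_sub_le _ (pre_pos ha N) t t' ht.1 ht'.1).trans ?_
    have hq : (N : ℝ) ≤ cQ (pre a N) := by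
      exact_mod_cast (pre_length a N) ▸ length_le_cQ _ (pre_pos ha N)
    have hq1 : (1 : ℝ) ≤ cQ (pre a N) := by
      exact_mod_cast cQ_pos _ (pre_pos ha N)
    have : |t - t'| ≤ 1 := by rw [abs_le]; constructor <;> linarith [ht.1, ht.2, ht'.1, ht'.2]
    rw [mul_one_div, div_le_div_iff₀ (by positivity) (by positivity)]
    nlinarith [abs_nonneg (t - t')]
  · simpa using (tendsto_one_div_add_atTop_nhds_zero_nat (𝕜 := ℝ)).const_mul 2

theorem cf_step {a : ℕ → ℕ} (ha : ∀ n, 1 ≤ a n) :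
    cf a = 1 / ((a 0 : ℝ) + cf (fun i => a (i + 1))) ∧ 0 ≤ cf a := by
  have h1 : ∀ {a : ℕ → ℕ}, (∀ n, 1 ≤ a n) → 0 ≤ cf a := by
    intro a ha
    exact ge_of_tendsto' (cf_tendsto ha) (fun n => phi_nonneg _ (pre_pos ha n) _ le_rfl)
  refine ⟨?_, h1 ha⟩
  have h2 := (tendsto_add_atTop_iff_nat 1).2 (cf_tendsto ha)
  have h3 := cf_tendsto (a := fun i => a (i + 1)) (fun n => ha _)
  have h4 : (0 : ℝ) < (a 0 : ℝ) + cf (fun i => a (i + 1)) := by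
    have := h1 (a := fun i => a (i + 1)) (fun n => ha _)
    have h0 : (1 : ℝ) ≤ a 0 := by exact_mod_cast ha 0
    linarith
  refine tendsto_nhds_unique h2 ?_
  have h5 := (tendsto_const_nhds (x := (1 : ℝ))).div
    ((tendsto_const_nhds (x := (a 0 : ℝ))).add h3) h4.ne'
  refine h5.congr (fun n => ?_)
  simp only [pre_succ', phi, Pi.div_apply]

theorem cf_mem {a : ℕ → ℕ} (ha : ∀ n, 1 ≤ a n) : cf a ∈ Ioo (0 : ℝ) 1 := by
  have hpos : ∀ {a : ℕ → ℕ}, (∀ n, 1 ≤ a n) → 0 < cf a := by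
    intro a ha
    have h0 : (1 : ℝ) ≤ a 0 := by exact_mod_cast ha 0
    have := (cf_step (a := fun i => a (i + 1)) (fun n => ha _)).2
    rw [(cf_step ha).1]; positivity
  refine ⟨hpos ha, ?_⟩
  have h0 : (1 : ℝ) ≤ a 0 := by exact_mod_cast ha 0
  have := hpos (a := fun i => a (i + 1)) (fun n => ha _)
  rw [(cf_step ha).1, div_lt_one (by positivity)]
  linarith

theorem cf_floor {a : ℕ → ℕ} (ha : ∀ n, 1 ≤ a n) :
    ⌊1 / cf a⌋₊ = a 0 ∧ gaussMap (cf a) = cf (fun i => a (i + 1)) := by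
  have h := cf_mem (a := fun i => a (i + 1)) (fun n => ha _)
  have e : 1 / cf a = (a 0 : ℝ) + cf (fun i => a (i + 1)) := by
    rw [(cf_step ha).1, one_div_one_div]
  refine ⟨?_, ?_⟩
  · rw [e, Nat.floor_eq_iff (by linarith [h.1, Nat.cast_nonneg (α := ℝ) (a 0)])]
    constructor <;> linarith [h.1, h.2]
  · have : ⌊1 / cf a⌋ = (a 0 : ℤ) := by
      rw [Int.floor_eq_iff, e]; push_cast
      constructor <;> linarith [h.1, h.2]
    rw [gaussMap, this, e]; push_cast; ring

theorem cf_iter {a : ℕ → ℕ} (ha : ∀ n, 1 ≤ a n) (n : ℕ) :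
    gaussMap^[n] (cf a) = cf (fun i => a (n + i)) := by
  induction n with
  | zero => simp
  | succ n ih =>
    rw [Function.iterate_succ_apply', ih, (cf_floor (fun _ => ha _)).2]
    congr 1; ext i; congr 1; ring

theorem pq_cf {a : ℕ → ℕ} (ha : ∀ n, 1 ≤ a n) (n : ℕ) : pq (cf a) (n + 1) = a n := by
  rw [pq, Nat.add_sub_cancel, cf_iter ha, (cf_floor (fun _ => ha _)).1]; rfl

theorem cf_not_rat (n : ℕ) : ∀ (p : ℕ) (a : ℕ → ℕ), (∀ n, 1 ≤ a n) → 0 < n →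
    cf a ≠ (p : ℝ) / n := by
  induction n using Nat.strong_induction_on with
  | _ n ih =>
    intro p a ha hn he
    have h := cf_mem ha
    have hn' : (0 : ℝ) < n := by exact_mod_cast hn
    rw [he] at h
    have hp : (0 : ℝ) < p := by
      rcases Nat.eq_zero_or_pos p with h0 | h0
      · subst h0; simp at h
      · exact_mod_cast h0
    have hpn : p < n := by
      have := h.2; rw [div_lt_one hn'] at this; exact_mod_cast this
    have hs := cf_mem (a := fun i => a (i + 1)) (fun n => ha _)
    have e : (n : ℝ) / p = (a 0 : ℝ) + cf (fun i => a (i + 1)) := by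
      rw [← one_div_div, ← he, (cf_step ha).1, one_div_one_div]
    have e2 : cf (fun i => a (i + 1)) = ((n : ℝ) - a 0 * p) / p := by
      rw [sub_div, mul_div_cancel_right₀ _ hp.ne', e]; ring
    have hge : a 0 * p ≤ n := by
      have := hs.1; rw [e2] at this
      have := (div_pos_iff_of_pos_right hp).1 this
      have h3 : ((a 0 * p : ℕ) : ℝ) ≤ n := by push_cast; linarith
      exact_mod_cast h3
    refine ih p hpn (n - a 0 * p) (fun i => a (i + 1)) (fun _ => ha _) (by exact_mod_cast hp) ?_
    rw [e2]; push_cast [Nat.cast_sub hge]; rfl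

theorem cf_irrational {a : ℕ → ℕ} (ha : ∀ n, 1 ≤ a n) : Irrational (cf a) := by
  rintro ⟨r, hr⟩
  have h := cf_mem ha
  have hr0 : 0 < r := by rw [← hr] at h; exact_mod_cast h.1
  refine cf_not_rat r.den r.num.toNat a ha r.den_pos ?_
  rw [← hr]
  have h1 : ((r.num.toNat : ℤ) : ℝ) = (r.num : ℝ) := by
    rw [Int.toNat_of_nonneg (Rat.num_nonneg.2 hr0.le)]
  have h2 : ((r.num.toNat : ℕ) : ℝ) = (r.num : ℝ) := by exact_mod_cast h1
  rw [h2]; exact Rat.cast_def r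

theorem cf_eq_phi {a : ℕ → ℕ} (ha : ∀ n, 1 ≤ a n) (n : ℕ) :
    cf a = phi (pre a n) (cf (fun i => a (n + i))) := by
  have h := eq_phi (cf_mem ha) (cf_irrational ha) n
  simp only [pq_cf ha, cf_iter ha] at h
  exact h

/-- Separation of two points whose digits first differ at `n`. -/
theorem cf_sep {a b : ℕ → ℕ} (ha : ∀ n, 1 ≤ a n) (hb : ∀ n, 1 ≤ b n) (M : ℕ) (hM : 1 ≤ M) (n : ℕ)
    (hab : ∀ i < n, a i = b i)
    (h : (a (n + 1) ≤ M ∧ b (n + 1) ≤ M) ∨ (2 ≤ a (n + 1) ∧ 2 ≤ b (n + 1))) :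
    |(a n : ℝ) - b n| / ((M + 1) * ((cQ (pre a n) : ℝ) ^ 2 * ((a n + 2) * (b n + 2)))) ≤
      |cf a - cf b| := by
  wlog hlt : b n < a n generalizing a b
  · rcases lt_or_eq_of_le (not_lt.1 hlt) with h1 | h1
    · have := this hb ha (fun i hi => (hab i hi).symm) (h.imp And.symm And.symm) h1
      rw [abs_sub_comm, abs_sub_comm (cf a), pre_congr hab, mul_comm ((a n : ℝ) + 2)]
      exact this
    · rw [h1]; simp
  have hsa : ∀ i, 1 ≤ (fun i => a (n + i)) i := fun i => ha _
  have hsb : ∀ i, 1 ≤ (fun i => b (n + i)) i := fun i => hb _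
  have hta : ∀ i, 1 ≤ (fun i => a (n + (i + 1))) i := fun i => ha _
  have htb : ∀ i, 1 ≤ (fun i => b (n + (i + 1))) i := fun i => hb _
  have hua : ∀ i, 1 ≤ (fun i => a (n + (i + 1 + 1))) i := fun i => ha _
  have hub : ∀ i, 1 ≤ (fun i => b (n + (i + 1 + 1))) i := fun i => hb _
  have e1 := cf_eq_phi ha n
  have e2 := cf_eq_phi hb n
  rw [← pre_congr hab] at e2
  have s1 := (cf_step hsa).1
  have s2 := (cf_step hsb).1
  have s3 := (cf_step hta).1
  have s4 := (cf_step htb).1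
  have m1 := cf_mem hta
  have m2 := cf_mem htb
  have m3 := cf_mem hua
  have m4 := cf_mem hub
  have m5 := cf_mem hsa
  have m6 := cf_mem hsb
  simp only [add_zero, zero_add] at s1 s2 s3 s4
  set x := cf (fun i => a (n + i))
  set y := cf (fun i => b (n + i))
  set t := cf (fun i => a (n + (i + 1)))
  set t' := cf (fun i => b (n + (i + 1)))
  set u := cf (fun i => a (n + (i + 1 + 1)))
  set u' := cf (fun i => b (n + (i + 1 + 1)))
  set Q := cQ (pre a n) with hQ
  have hQ1 : (1 : ℝ) ≤ Q := by exact_mod_cast cQ_pos _ (pre_pos ha n)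
  have hQ' : (cQ' (pre a n) : ℝ) ≤ Q := by exact_mod_cast cQ'_le _ (pre_pos ha n)
  have hM' : (1 : ℝ) ≤ M := by exact_mod_cast hM
  have hlt' : (b n : ℝ) + 1 ≤ a n := by exact_mod_cast hlt
  have hb1 : (1 : ℝ) ≤ b n := by exact_mod_cast hb n
  -- the tails differ
  have hd : ((a n : ℝ) - b n) / (M + 1) ≤ ((a n : ℝ) + t) - (b n + t') := by
    have hc : 1 / ((M : ℝ) + 1) ≤ 1 + t - t' := by
      rcases h with h | h
      · have : 1 / ((M : ℝ) + 1) ≤ t := by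
          rw [s3]; apply one_div_le_one_div_of_le
          · have : (1 : ℝ) ≤ a (n + 1) := by exact_mod_cast ha _
            linarith [m3.1]
          · have : (a (n + 1) : ℝ) ≤ M := by exact_mod_cast h.1
            linarith [m3.2]
        linarith [m2.2]
      · have h2 : (2 : ℝ) ≤ b (n + 1) := by exact_mod_cast h.2
        have : t' ≤ 1 / 2 := by
          rw [s4]; apply one_div_le_one_div_of_le (by norm_num)
          linarith [m4.1]
        have : 1 / ((M : ℝ) + 1) ≤ 1 / 2 :=
          one_div_le_one_div_of_le (by norm_num) (by linarith)
        linarith [m1.1]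
    have h5 : (1 : ℝ) / (M + 1) ≤ 1 := by rw [div_le_one] <;> linarith
    rw [div_eq_mul_one_div]
    nlinarith
  have hxy : y - x = x * y * (((a n : ℝ) + t) - (b n + t')) := by
    have p1 : (a n : ℝ) + t ≠ 0 := by linarith [m1.1]
    have p2 : (b n : ℝ) + t' ≠ 0 := by linarith [m2.1]
    rw [s1, s2]; field_simp
  have hpos : 0 ≤ ((a n : ℝ) - b n) / (M + 1) := div_nonneg (by linarith) (by linarith)
  rw [e1, e2, phi_sub _ (pre_pos ha n) _ _ m5.1.le m6.1.le, abs_sub_comm x y,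
    abs_of_nonneg (by linarith : (0 : ℝ) ≤ (a n : ℝ) - b n), hxy,
    abs_of_nonneg (by have := m5.1; have := m6.1; have := hpos.trans hd; positivity)]
  rw [← div_div]
  have hx2 : ∀ {z d v : ℝ}, 1 ≤ d → v ∈ Ioo (0 : ℝ) 1 → z = 1 / (d + v) →
      (cQ' (pre a n) * z + Q) ≤ (d + 2) * z * Q := by
    intro z d v hd' hv hz
    have hdv : 0 < d + v := by linarith [hv.1]
    have hz0 : 0 < z := by rw [hz]; positivity
    have : 1 ≤ z * (d + 1) := by
      rw [hz, one_div_mul_eq_div, one_le_div hdv]; linarith [hv.2]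
    have h7 : (cQ' (pre a n) : ℝ) * z ≤ Q * z := by gcongr
    nlinarith [mul_le_mul_of_nonneg_left this (by linarith : (0 : ℝ) ≤ Q)]
  have k1 := hx2 (by linarith) m1 s1
  have k2 := hx2 hb1 m2 s2
  have x0 := m5.1
  have y0 := m6.1
  have d1 : 0 < (cQ' (pre a n) : ℝ) * x + Q := by positivity
  have d2 : 0 < (cQ' (pre a n) : ℝ) * y + Q := by positivity
  have k3 := mul_le_mul k1 k2 d2.le (by positivity)
  rw [div_le_div_iff₀ (by positivity) (by positivity)]
  calc ((a n : ℝ) - b n) / (M + 1) * ((cQ' (pre a n) * x + Q) * (cQ' (pre a n) * y + Q))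
      ≤ (((a n : ℝ) + t) - (b n + t')) * ((a n + 2) * x * Q * ((b n + 2) * y * Q)) :=
        mul_le_mul hd k3 (by positivity) (hpos.trans hd)
    _ = _ := by ring


/-! ### Partition sums -/

theorem etsum_prod {α β : Type*} (f : α × β → ENNReal) :
    ∑' p : α × β, f p = ∑' a, ∑' b, f (a, b) :=
  ENNReal.tsum_prod (f := fun a b => f (a, b))


/-- The list of digits of a word. -/
def wl {n : ℕ} (a : Fin n → ℕ+) : List ℕ := List.ofFn (fun i => (a i : ℕ))

theorem wl_pos {n : ℕ} (a : Fin n → ℕ+) : ∀ b ∈ wl a, 1 ≤ b := by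
  intro b hb
  simp only [wl, List.mem_ofFn] at hb
  obtain ⟨i, rfl⟩ := hb
  exact (a i).pos

theorem wl_append {m n : ℕ} (u : Fin m → ℕ+) (v : Fin n → ℕ+) :
    wl (Fin.append u v) = wl u ++ wl v := by
  rw [wl, wl, wl, ← List.ofFn_fin_append]
  congr 1
  ext i
  refine Fin.addCases (fun i => ?_) (fun i => ?_) i <;> simp

theorem wq_pos {n : ℕ} (a : Fin n → ℕ+) : (1 : ℝ) ≤ cQ (wl a) := by
  exact_mod_cast cQ_pos _ (wl_pos a)

/-- `S n s = ∑ q_n^{-2s}`. -/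
noncomputable def S (n : ℕ) (s : ℝ) : ENNReal :=
  ∑' a : Fin n → ℕ+, ENNReal.ofReal ((cQ (wl a) : ℝ) ^ (-(2 * s)))

theorem frozen_sum (B : ℝ) (hB : 1 < B) (n : ℕ) (s : ℝ) :
    (∑' a : Fin n → ℕ+, ENNReal.ofReal (B ^ (-(n : ℝ) * (3 * s - 1)) *
            ((contQ n fun i => (a i : ℕ)) : ℝ) ^ (-(2 * s))))
      = ENNReal.ofReal (B ^ (-(n : ℝ) * (3 * s - 1))) * S n s := by
  rw [S, ← ENNReal.tsum_mul_left]
  congr 1; ext a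
  rw [contQ_eq, ENNReal.ofReal_mul (by positivity)]; rfl

theorem S_anti (n : ℕ) {s s' : ℝ} (h : s ≤ s') : S n s' ≤ S n s := by
  apply ENNReal.tsum_le_tsum
  intro a
  apply ENNReal.ofReal_le_ofReal
  exact Real.rpow_le_rpow_of_exponent_le (wq_pos a) (by linarith)

theorem S_mul (m n : ℕ) {s : ℝ} (hs : 0 ≤ s) :
    S m s * S n s ≤ ENNReal.ofReal (2 ^ (2 * s)) * S (m + n) s := by
  have h1 : S m s * S n s = ∑' p : (Fin m → ℕ+) × (Fin n → ℕ+),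
      ENNReal.ofReal ((cQ (wl p.1) : ℝ) ^ (-(2 * s))) *
        ENNReal.ofReal ((cQ (wl p.2) : ℝ) ^ (-(2 * s))) := by
    rw [etsum_prod, S, S, ← ENNReal.tsum_mul_right]
    simp_rw [ENNReal.tsum_mul_left]
  rw [h1, S, ← ENNReal.tsum_mul_left, ← (Fin.appendEquiv m n).tsum_eq]
  apply ENNReal.tsum_le_tsum
  rintro ⟨u, v⟩
  have e : (Fin.appendEquiv m n) (u, v) = Fin.append u v := rfl
  have hu := wq_pos u
  have hv := wq_pos v
  have huv := wq_pos (Fin.append u v)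
  rw [e, ← ENNReal.ofReal_mul (by positivity), ← ENNReal.ofReal_mul (by positivity)]
  apply ENNReal.ofReal_le_ofReal
  have h2 : (cQ (wl (Fin.append u v)) : ℝ) ≤ 2 * (cQ (wl u) * cQ (wl v)) := by
    rw [wl_append]; exact_mod_cast cQ_append_le _ _ (wl_pos u) (wl_pos v)
  have h3 := Real.rpow_le_rpow_of_nonpos (by linarith) h2 (by linarith : -(2 * s) ≤ 0)
  rw [Real.mul_rpow (by norm_num) (by positivity), Real.mul_rpow (by positivity) (by positivity),
    Real.rpow_neg (by norm_num)] at h3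
  have h4 : (0 : ℝ) < 2 ^ (2 * s) := by positivity
  rwa [inv_mul_le_iff₀ h4] at h3

theorem S_zero (s : ℝ) : S 0 s = 1 := by
  rw [S, tsum_eq_single (default : Fin 0 → ℕ+)]
  · simp [wl, cQ_nil]
  · intro b hb; exact absurd (Subsingleton.elim _ _) hb

theorem S_one (s : ℝ) : S 1 s = ∑' d : ℕ+, ENNReal.ofReal ((d : ℝ) ^ (-(2 * s))) := by
  rw [S, ← (Equiv.funUnique (Fin 1) ℕ+).symm.tsum_eq]
  congr 1; ext d
  simp [wl, cQ_cons, cQ_nil, cP_nil]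

theorem S_one_half : S 1 (1 / 2) = ⊤ := by
  rw [S_one, ← Equiv.pnatEquivNat.symm.tsum_eq]
  by_contra h
  have h1 := ENNReal.summable_toReal h
  have h2 : Summable (fun n : ℕ => 1 / ((n + 1 : ℕ) : ℝ)) := by
    refine h1.congr (fun n => ?_)
    rw [ENNReal.toReal_ofReal (by positivity)]
    simp [Equiv.pnatEquivNat, Real.rpow_neg_one]
  exact Real.not_summable_one_div_natCast ((summable_nat_add_iff 1).1 h2)

theorem S_ne_zero (n : ℕ) (s : ℝ) : S n s ≠ 0 := by
  rw [S]
  intro h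
  rw [ENNReal.tsum_eq_zero] at h
  have := h (fun _ => 1)
  rw [ENNReal.ofReal_eq_zero] at this
  have h1 := wq_pos (n := n) (fun _ => 1)
  have : (0 : ℝ) < (cQ (wl (n := n) (fun _ => 1)) : ℝ) ^ (-(2 * s)) := by positivity
  linarith

theorem S_top {n : ℕ} (hn : 1 ≤ n) {s : ℝ} (hs : s ≤ 1 / 2) : S n s = ⊤ := by
  have : S n (1 / 2) = ⊤ := by
    obtain ⟨k, rfl⟩ := Nat.exists_eq_add_of_le hn
    have h := S_mul 1 k (s := 1 / 2) (by norm_num)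
    rw [S_one_half, ENNReal.top_mul (S_ne_zero _ _), top_le_iff] at h
    exact (ENNReal.mul_eq_top.1 h).elim (fun h => h.2) (fun h => absurd h.1 ENNReal.ofReal_ne_top)
  exact top_le_iff.1 (this ▸ S_anti n hs)

theorem telescope (q q' : ℝ) (hq : 1 ≤ q) (hq' : 0 ≤ q') :
    ∑' d : ℕ+, ENNReal.ofReal (1 / ((d * q + q') * (d * q + q' + q)))
      ≤ ENNReal.ofReal (1 / (q * (q + q'))) := by
  rw [← Equiv.pnatEquivNat.symm.tsum_eq, ENNReal.tsum_eq_iSup_nat]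
  apply iSup_le
  intro n
  have : ∀ k : ℕ, ∑ i ∈ Finset.range k, (1 / (((i + 1 : ℕ) * q + q') * ((i + 1 : ℕ) * q + q' + q)))
      = 1 / (q * (q + q')) - 1 / (q * ((k + 1) * q + q')) := by
    intro k
    induction k with
    | zero => simp
    | succ k ih =>
      rw [Finset.sum_range_succ, ih]
      push_cast
      have h1 : q + q' ≠ 0 := by positivity
      have h2 : ((k : ℝ) + 1) * q + q' ≠ 0 := by positivity
      have h3 : ((k : ℝ) + 1 + 1) * q + q' ≠ 0 := by positivity
      have h4 : ((k : ℝ) + 1) * q + q' + q ≠ 0 := by positivity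
      have h5 : ((k : ℝ) + 1 + 1) * q + q' = ((k : ℝ) + 1) * q + q' + q := by ring
      rw [h5]
      field_simp
      ring
  have e : ∀ i : ℕ, (((Equiv.pnatEquivNat.symm i : ℕ+) : ℕ) : ℝ) = ((i + 1 : ℕ) : ℝ) := by
    intro i; simp [Equiv.pnatEquivNat]
  simp_rw [e]
  rw [← ENNReal.ofReal_sum_of_nonneg (fun i _ => by positivity), this]
  apply ENNReal.ofReal_le_ofReal
  have : 0 ≤ 1 / (q * (((n : ℝ) + 1) * q + q')) := by positivity
  linarith

theorem V_le (n : ℕ) : ∑' a : Fin n → ℕ+,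
    ENNReal.ofReal (1 / ((cQ (wl a) : ℝ) * (cQ (wl a) + cQ' (wl a)))) ≤ 1 := by
  induction n with
  | zero =>
    rw [tsum_eq_single (default : Fin 0 → ℕ+)]
    · simp [wl, cQ_nil, cQ'_nil]
    · intro b hb; exact absurd (Subsingleton.elim _ _) hb
  | succ n ih =>
    refine le_trans ?_ ih
    rw [← (Fin.appendEquiv n 1).tsum_eq, etsum_prod]
    apply ENNReal.tsum_le_tsum
    intro u
    rw [← (Equiv.funUnique (Fin 1) ℕ+).symm.tsum_eq]
    refine le_trans (le_of_eq ?_) (telescope _ _ (wq_pos u) (Nat.cast_nonneg (cQ' (wl u))))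
    congr 1; ext d
    have e : (Fin.appendEquiv n 1) (u, (Equiv.funUnique (Fin 1) ℕ+).symm d)
        = Fin.append u (fun _ => d) := rfl
    have e2 : wl (fun _ : Fin 1 => d) = [(d : ℕ)] := by simp [wl]
    rw [e, wl_append, e2, cQ_concat, cQ'_concat]
    push_cast; rfl

theorem S_one_le (n : ℕ) : S n 1 ≤ 2 := by
  have h : S n 1 ≤ 2 * ∑' a : Fin n → ℕ+,
    ENNReal.ofReal (1 / ((cQ (wl a) : ℝ) * (cQ (wl a) + cQ' (wl a)))) := by
    rw [S, ← ENNReal.tsum_mul_left]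
    apply ENNReal.tsum_le_tsum
    intro a
    have h1 := wq_pos a
    have h2 : (cQ' (wl a) : ℝ) ≤ cQ (wl a) := by exact_mod_cast cQ'_le _ (wl_pos a)
    rw [show (2 : ENNReal) = ENNReal.ofReal 2 by simp, ← ENNReal.ofReal_mul (by norm_num)]
    apply ENNReal.ofReal_le_ofReal
    rw [mul_one, Real.rpow_neg (by positivity), Real.rpow_two, mul_one_div,
      inv_eq_one_div, div_le_div_iff₀ (by positivity) (by positivity)]
    nlinarith
  refine h.trans ?_
  calc _ ≤ 2 * (1 : ENNReal) := by gcongr; exact V_le n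
    _ = 2 := mul_one _

/-- The pressure-type quantity of the statement. -/
noncomputable def press (B s : ℝ) : EReal :=
  Filter.atTop.limsup (fun n : ℕ =>
        (((n : ℝ)⁻¹ : ℝ) : EReal) * ENNReal.log (∑' a : Fin n → ℕ+,
          ENNReal.ofReal (B ^ (-(n : ℝ) * (3 * s - 1)) *
            ((contQ n fun i => (a i : ℕ)) : ℝ) ^ (-(2 * s)))))

theorem press_term_lt (η : ℝ) (n : ℕ) (hn : 1 ≤ n) (X : ENNReal) :
    ((((n : ℝ)⁻¹ : ℝ) : EReal) * ENNReal.log X < (η : EReal) ↔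
      X < ENNReal.ofReal (Real.exp (η * n))) ∧
    ((η : EReal) < (((n : ℝ)⁻¹ : ℝ) : EReal) * ENNReal.log X ↔
      ENNReal.ofReal (Real.exp (η * n)) < X) := by
  have hn' : (0 : ℝ) < n := by exact_mod_cast hn
  have e1 : (η : EReal) = ENNReal.log (ENNReal.ofReal (Real.exp η)) := by
    rw [ENNReal.log_ofReal_of_pos (Real.exp_pos _), Real.log_exp]
  have e2 : ENNReal.ofReal (Real.exp (η * n)) = ENNReal.ofReal (Real.exp η) ^ (n : ℝ) := by
    rw [ENNReal.ofReal_rpow_of_pos (Real.exp_pos _), Real.exp_mul]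
  rw [← ENNReal.log_rpow, e1, ENNReal.log_lt_log_iff, ENNReal.log_lt_log_iff, e2]
  exact ⟨ENNReal.rpow_inv_lt_iff hn', ENNReal.lt_rpow_inv_iff hn'⟩

theorem press_up {B s : ℝ} (hB : 1 < B) (h : press B s ≤ 0) {η : ℝ} (hη : 0 < η) :
    ∀ᶠ n : ℕ in atTop, S n s ≤ ENNReal.ofReal (Real.exp (η * n) * B ^ ((n : ℝ) * (3 * s - 1))) := by
  have h1 : press B s < (η : EReal) := lt_of_le_of_lt h (by exact_mod_cast hη)
  have h2 := eventually_lt_of_limsup_lt h1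
  filter_upwards [h2, eventually_ge_atTop 1] with n hn hn1
  rw [(press_term_lt η n hn1 _).1, frozen_sum B hB] at hn
  have hB0 : 0 < B := by linarith
  have hp : 0 < B ^ ((n : ℝ) * (3 * s - 1)) := by positivity
  rw [neg_mul, Real.rpow_neg hB0.le, ENNReal.ofReal_inv_of_pos hp, mul_comm,
    ← div_eq_mul_inv, ENNReal.div_lt_iff (by left; simpa using hp) (by simp)] at hn
  rw [ENNReal.ofReal_mul (Real.exp_pos _).le]
  exact hn.le

theorem press_low {B s : ℝ} (hB : 1 < B) (h : ¬ press B s ≤ 0) :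
    ∃ δ > 0, ∃ᶠ n : ℕ in atTop,
      ENNReal.ofReal (Real.exp (δ * n) * B ^ ((n : ℝ) * (3 * s - 1))) < S n s := by
  obtain ⟨δ, h0, h1⟩ := EReal.lt_iff_exists_real_btwn.1 (not_le.1 h)
  refine ⟨δ, by exact_mod_cast h0, ?_⟩
  have h2 := frequently_lt_of_lt_limsup (by isBoundedDefault) h1
  refine (h2.and_eventually (eventually_ge_atTop 1)).mono ?_
  rintro n ⟨hn, hn1⟩
  rw [(press_term_lt δ n hn1 _).2, frozen_sum B hB] at hn
  have hB0 : 0 < B := by linarith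
  have hp : 0 < B ^ ((n : ℝ) * (3 * s - 1)) := by positivity
  rw [neg_mul, Real.rpow_neg hB0.le, ENNReal.ofReal_inv_of_pos hp, mul_comm _ (S n s),
    ← div_eq_mul_inv, ENNReal.lt_div_iff_mul_lt (by left; simpa using hp) (by simp)] at hn
  rw [ENNReal.ofReal_mul (Real.exp_pos _).le]
  exact hn

theorem press_half {B s : ℝ} (hB : 1 < B) (hs : s ≤ 1 / 2) : ¬ press B s ≤ 0 := by
  intro h
  obtain ⟨n, h1, h2⟩ := ((press_up hB h one_pos).and (eventually_ge_atTop 1)).exists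
  rw [S_top h2 hs] at h1
  exact ENNReal.ofReal_ne_top (top_le_iff.1 h1)

theorem press_one {B : ℝ} (hB : 1 < B) : press B 1 ≤ 0 := by
  by_contra h
  obtain ⟨δ, hδ, h1⟩ := press_low hB h
  have h2 : Tendsto (fun n : ℕ => Real.exp (δ * n)) atTop atTop :=
    Real.tendsto_exp_atTop.comp (tendsto_natCast_atTop_atTop.const_mul_atTop hδ)
  obtain ⟨n, hn, hn2⟩ := (h1.and_eventually (h2.eventually_ge_atTop 2)).exists
  have h3 := hn.trans_le (S_one_le n)
  rw [show (2 : ENNReal) = ENNReal.ofReal 2 by simp, ENNReal.ofReal_lt_ofReal_iff (by norm_num)] at h3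
  have h4 : 1 ≤ B ^ ((n : ℝ) * (3 * 1 - 1)) := Real.one_le_rpow hB.le (by norm_num)
  nlinarith


/-! ### Upper bound -/

theorem haus_limsup {ι : ℕ → Type} [∀ n, Countable (ι n)] (E : Set ℝ) (s : ℝ)
    (t : ∀ n, ι n → Set ℝ) (r : ℕ → ENNReal) (hra : Antitone r) (hr : Tendsto r atTop (nhds 0))
    (ht : ∀ n i, Metric.ediam (t n i) ≤ r n) (c : ℕ → ENNReal)
    (hc : ∀ᶠ n in atTop, ∑' i, Metric.ediam (t n i) ^ s ≤ c n) (hcs : ∑' n, c n ≠ ⊤)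
    (hE : ∀ x ∈ E, ∃ᶠ n in atTop, x ∈ ⋃ i, t n i) : Measure.hausdorffMeasure s E = 0 := by
  have h := Measure.hausdorffMeasure_le_liminf_tsum (β := ℕ) (ι := fun N => Σ n : ℕ, ι (n + N)) s E
    (l := atTop) r hr (fun N p => t (p.1 + N) p.2)
    (Eventually.of_forall fun N p => (ht _ _).trans (hra (Nat.le_add_left _ _)))
    (Eventually.of_forall fun N x hx => by
      obtain ⟨n, hn, hx⟩ := (frequently_atTop.1 (hE x hx)) N
      obtain ⟨k, rfl⟩ := Nat.exists_eq_add_of_le' hn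
      obtain ⟨i, hi⟩ := mem_iUnion.1 hx
      exact mem_iUnion.2 ⟨⟨k, i⟩, hi⟩)
  have h2 : Tendsto (fun N => ∑' p : Σ n : ℕ, ι (n + N), Metric.ediam (t (p.1 + N) p.2) ^ s) atTop
      (nhds 0) := by
    refine tendsto_of_tendsto_of_tendsto_of_le_of_le' tendsto_const_nhds
      (ENNReal.tendsto_sum_nat_add c hcs) (Eventually.of_forall fun _ => zero_le) ?_
    obtain ⟨n0, hn0⟩ := eventually_atTop.1 hc
    filter_upwards [eventually_ge_atTop n0] with N hN
    rw [ENNReal.tsum_sigma']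
    exact ENNReal.tsum_le_tsum (fun n => hn0 _ (by omega))
  rw [h2.liminf_eq] at h
  exact le_antisymm h zero_le

/-- Points with prescribed initial digits and a large next digit. -/
def Jset (w : List ℕ) (H : ℝ) : Set ℝ :=
  {x | x ∈ Ioo (0 : ℝ) 1 ∧ Irrational x ∧ pre (fun i => pq x (i + 1)) w.length = w ∧
    H ≤ pq x (w.length + 1)}

theorem Jset_diam (w : List ℕ) (hw : ∀ a ∈ w, 1 ≤ a) (H : ℝ) (hH : 0 < H) :
    Metric.ediam (Jset w H) ≤ ENNReal.ofReal (1 / ((cQ w : ℝ) ^ 2 * H)) := by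
  apply Metric.ediam_le
  rintro x ⟨hx, hxi, hxw, hxH⟩ y ⟨hy, hyi, hyw, hyH⟩
  have key : ∀ z : ℝ, z ∈ Ioo (0 : ℝ) 1 → Irrational z → H ≤ pq z (w.length + 1) →
      0 < gaussMap^[w.length] z ∧ gaussMap^[w.length] z ≤ 1 / H := by
    intro z hz hzi hzH
    have hm := (gauss_iter hz hzi w.length).1
    refine ⟨hm.1, ?_⟩
    have h2 : H ≤ 1 / gaussMap^[w.length] z := by
      refine hzH.trans ?_
      rw [pq, Nat.add_sub_cancel]
      exact Nat.floor_le (by have := hm.1; positivity)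
    rw [le_div_iff₀ hm.1] at h2
    rw [le_div_iff₀ hH]; linarith
  obtain ⟨x1, x2⟩ := key x hx hxi hxH
  obtain ⟨y1, y2⟩ := key y hy hyi hyH
  have ex := eq_phi hx hxi w.length
  have ey := eq_phi hy hyi w.length
  rw [pre] at hxw hyw
  rw [hxw] at ex
  rw [hyw] at ey
  rw [edist_dist, Real.dist_eq]
  apply ENNReal.ofReal_le_ofReal
  rw [ex, ey]
  refine (phi_sub_le w hw _ _ x1.le y1.le).trans ?_
  have hq : (1 : ℝ) ≤ cQ w := by exact_mod_cast cQ_pos w hw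
  rw [mul_comm, ← div_div]
  gcongr
  rw [abs_le]; constructor <;> linarith

theorem upper_bound (ψ : ℕ → ℝ) (hψmono : Monotone ψ) (B : ℝ) (hB : 1 < B)
    (hψ : ∀ b, 1 < b → b < B → ∀ᶠ n : ℕ in atTop, b ^ n ≤ ψ n)
    (s' s : ℝ) (hs' : 1 / 2 < s') (hss : s' < s) (hp : press B s' ≤ 0) :
    Measure.hausdorffMeasure s {x : ℝ | x ∈ Set.Ioo (0 : ℝ) 1 ∧ Irrational x ∧
      {n : ℕ | ∃ k l : ℕ, 1 ≤ k ∧ k ≤ n ∧ 1 ≤ l ∧ l ≤ n ∧ k ≠ l ∧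
        ψ n ≤ (pq x k : ℝ) ∧ ψ n ≤ (pq x l : ℝ)}.Infinite} = 0 := by
  have hB0 : 0 < B := by linarith
  set ε := s - s' with hε
  have hε0 : 0 < ε := by linarith
  set X := 3 * s - 1 - ε with hX
  have hX0 : 0 < X := by linarith
  set b := B ^ ((X - ε) / X) with hb
  have hXε : 0 < (X - ε) / X := div_pos (by linarith) hX0
  have hb1 : 1 < b := Real.one_lt_rpow hB hXε
  have hbB : b < B := by
    have : b < B ^ (1 : ℝ) := Real.rpow_lt_rpow_of_exponent_lt hB
      (by rw [div_lt_one hX0]; linarith)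
    simpa using this
  have hbX : b ^ X = B ^ (X - ε) := by
    rw [hb, ← Real.rpow_mul hB0.le, div_mul_cancel₀ _ hX0.ne']
  have hb0 : 0 < b := by linarith
  set θ := B ^ (-(ε / 2)) with hθ
  have hθ0 : 0 < θ := by positivity
  have hθ1 : θ < 1 := Real.rpow_lt_one_of_one_lt_of_neg hB (by linarith)
  set Z : ENNReal := ∑' d : ℕ+, ENNReal.ofReal ((d : ℝ) ^ (-(1 + ε))) with hZ
  have hZt : Z ≠ ⊤ := by
    have h1 : Summable (fun n : ℕ => (n : ℝ) ^ (-(1 + ε))) :=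
      Real.summable_nat_rpow.2 (by linarith)
    have h2 : Summable (fun d : ℕ+ => ((d : ℕ) : ℝ) ^ (-(1 + ε))) :=
      h1.comp_injective (i := fun d : ℕ+ => (d : ℕ)) PNat.coe_injective
    exact h2.tsum_ofReal_ne_top
  let H : ℕ → ℝ := fun m => b ^ (m + 2)
  have hH1 : ∀ m, 1 ≤ H m := fun m => one_le_pow₀ hb1.le
  let ι : ℕ → Type := fun m => Σ k : Fin (m + 1), (Fin k → ℕ+) × ℕ+ × (Fin (m - k) → ℕ+)
  let t : ∀ m, ι m → Set ℝ := fun m p =>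
    {x | H m ≤ (p.2.2.1 : ℝ) ∧ x ∈ Jset (wl p.2.1 ++ ((p.2.2.1 : ℕ) :: wl p.2.2.2)) (H m)}
  have hlist : ∀ {m : ℕ} (p : ι m), (∀ a ∈ wl p.2.1 ++ ((p.2.2.1 : ℕ) :: wl p.2.2.2), 1 ≤ a) := by
    intro m p a ha
    rcases List.mem_append.1 ha with h | h
    · exact wl_pos _ a h
    · rcases List.mem_cons.1 h with h | h
      · rw [h]; exact p.2.2.1.pos
      · exact wl_pos _ a h
  have hdiam : ∀ m (p : ι m), Metric.ediam (t m p) ≤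
      ENNReal.ofReal (1 / ((cQ (wl p.2.1 ++ ((p.2.2.1 : ℕ) :: wl p.2.2.2)) : ℝ) ^ 2 * H m)) :=
    fun m p => (Metric.ediam_mono (fun x hx => hx.2)).trans
      (Jset_diam _ (hlist p) _ (by linarith [hH1 m]))
  let c : ℕ → ENNReal := fun m =>
    (Z * ENNReal.ofReal (2 ^ (2 * s))) * ENNReal.ofReal (((m : ℝ) + 1) * θ ^ m)
  refine haus_limsup _ s t (fun m => ENNReal.ofReal ((b⁻¹) ^ m)) ?_ ?_ ?_ c ?_ ?_ ?_
  · intro i j hij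
    apply ENNReal.ofReal_le_ofReal
    exact pow_le_pow_of_le_one (by positivity) (inv_le_one_of_one_le₀ hb1.le) hij
  · rw [← ENNReal.ofReal_zero]
    exact ENNReal.tendsto_ofReal
      (tendsto_pow_atTop_nhds_zero_of_lt_one (by positivity) (inv_lt_one_of_one_lt₀ hb1))
  · intro m p
    refine (hdiam m p).trans (ENNReal.ofReal_le_ofReal ?_)
    rw [inv_pow, ← one_div]
    have hq : (1 : ℝ) ≤ cQ (wl p.2.1 ++ ((p.2.2.1 : ℕ) :: wl p.2.2.2)) := by
      exact_mod_cast cQ_pos _ (hlist p)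
    apply one_div_le_one_div_of_le (by positivity)
    have h1 : b ^ m ≤ H m := pow_le_pow_right₀ hb1.le (by omega)
    nlinarith [hH1 m, one_le_pow₀ hq (n := 2)]
  · -- the sums
    have hη : 0 < ε / 2 * Real.log B := by have := Real.log_pos hB; positivity
    filter_upwards [press_up hB hp hη] with m hm
    have hterm : ∀ p : ι m, Metric.ediam (t m p) ^ s ≤
        ENNReal.ofReal (H m ^ (-X)) * (ENNReal.ofReal ((cQ (wl p.2.1) : ℝ) ^ (-(2 * s))) *
          (ENNReal.ofReal ((p.2.2.1 : ℝ) ^ (-(1 + ε))) *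
            ENNReal.ofReal ((cQ (wl p.2.2.2) : ℝ) ^ (-(2 * s))))) := by
      rintro ⟨k, u, d, v⟩
      have hH0 : 0 < H m := by linarith [hH1 m]
      by_cases hd : H m ≤ (d : ℝ)
      · have hu := wq_pos u
        have hv := wq_pos v
        have hd0 : (0 : ℝ) < d := by linarith
        refine (ENNReal.rpow_le_rpow (hdiam m ⟨k, u, d, v⟩) (by linarith)).trans ?_
        have hq : (cQ (wl u) : ℝ) * (d * cQ (wl v)) ≤ cQ (wl u ++ ((d : ℕ) :: wl v)) := by
          have h1 := le_cQ_append (wl u) ((d : ℕ) :: wl v)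
          rw [cQ_cons] at h1
          have h2 : cQ (wl u) * ((d : ℕ) * cQ (wl v)) ≤ cQ (wl u ++ ((d : ℕ) :: wl v)) :=
            le_trans (Nat.mul_le_mul_left _ (Nat.le_add_right _ _)) h1
          exact_mod_cast h2
        have hpos : 0 < (cQ (wl u) : ℝ) * (d * cQ (wl v)) := by positivity
        rw [ENNReal.ofReal_rpow_of_pos (by have := hpos.trans_le hq; positivity),
          ← ENNReal.ofReal_mul (by positivity), ← ENNReal.ofReal_mul (by positivity),
          ← ENNReal.ofReal_mul (by positivity)]
        apply ENNReal.ofReal_le_ofReal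
        have hs0 : 0 ≤ s := by linarith
        calc (1 / ((cQ (wl u ++ ((d : ℕ) :: wl v)) : ℝ) ^ 2 * H m)) ^ s
            ≤ (1 / (((cQ (wl u) : ℝ) * (d * cQ (wl v))) ^ 2 * H m)) ^ s := by gcongr
          _ = H m ^ (-s) * ((cQ (wl u) : ℝ) ^ (-(2 * s)) *
              ((d : ℝ) ^ (-(2 * s)) * (cQ (wl v) : ℝ) ^ (-(2 * s)))) := by
            rw [one_div, Real.inv_rpow (by positivity), ← Real.rpow_neg (by positivity),
              Real.mul_rpow (by positivity) (by positivity), ← Real.rpow_natCast,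
              ← Real.rpow_mul (by positivity), Real.mul_rpow (by positivity) (by positivity),
              Real.mul_rpow (by positivity) (by positivity)]
            push_cast
            rw [mul_comm, show (2 : ℝ) * -s = -(2 * s) by ring]
          _ ≤ H m ^ (-s) * ((cQ (wl u) : ℝ) ^ (-(2 * s)) *
              ((H m ^ (-(2 * s - 1 - ε)) * (d : ℝ) ^ (-(1 + ε))) *
                (cQ (wl v) : ℝ) ^ (-(2 * s)))) := by
            gcongr
            rw [show -(2 * s) = -(2 * s - 1 - ε) + -(1 + ε) by ring, Real.rpow_add hd0]
            gcongr ?_ * _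
            exact Real.rpow_le_rpow_of_nonpos hH0 hd (by linarith)
          _ = _ := by
            have : H m ^ (-X) = H m ^ (-s) * H m ^ (-(2 * s - 1 - ε)) := by
              rw [← Real.rpow_add hH0]; congr 1; rw [hX]; ring
            rw [this]; ring
      · have : t m ⟨k, u, d, v⟩ = ∅ := by
          ext x; simp only [t, mem_ofPred_eq, mem_empty_iff_false, iff_false]
          exact fun h => hd h.1
        rw [this, Metric.ediam_empty, ENNReal.zero_rpow_of_pos (by linarith)]
        exact zero_le
    refine (ENNReal.tsum_le_tsum hterm).trans ?_
    rw [ENNReal.tsum_mul_left, ENNReal.tsum_sigma']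
    have hin : ∀ k : Fin (m + 1), (∑' q : (Fin k → ℕ+) × ℕ+ × (Fin (m - k) → ℕ+),
        (ENNReal.ofReal ((cQ (wl q.1) : ℝ) ^ (-(2 * s))) *
          (ENNReal.ofReal ((q.2.1 : ℝ) ^ (-(1 + ε))) *
            ENNReal.ofReal ((cQ (wl q.2.2) : ℝ) ^ (-(2 * s))))))
          ≤ Z * (ENNReal.ofReal (2 ^ (2 * s)) * S m s) := by
      intro k
      rw [etsum_prod]
      simp_rw [etsum_prod (α := ℕ+), ENNReal.tsum_mul_left, ENNReal.tsum_mul_right]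
      have h1 := S_mul k (m - k) (s := s) (by linarith)
      rw [Nat.add_sub_cancel' (by omega)] at h1
      calc _ = Z * (S k s * S (m - k) s) := by rw [hZ, S, S]; ring
        _ ≤ _ := by gcongr
    have hconst : (∑' _ : Fin (m + 1), Z * (ENNReal.ofReal (2 ^ (2 * s)) * S m s)) =
        ((m + 1 : ℕ) : ENNReal) * (Z * (ENNReal.ofReal (2 ^ (2 * s)) * S m s)) := by
      rw [tsum_fintype, Finset.sum_const, Finset.card_univ, Fintype.card_fin, nsmul_eq_mul]
    have hsum := (ENNReal.tsum_le_tsum hin).trans_eq hconst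
    have hSm : S m s ≤ _ := (S_anti m hss.le).trans hm
    refine (mul_le_mul_right hsum _).trans ?_
    calc _ ≤ ENNReal.ofReal (H m ^ (-X)) * (((m + 1 : ℕ) : ENNReal) * (Z * (ENNReal.ofReal (2 ^ (2 * s)) *
          ENNReal.ofReal (Real.exp (ε / 2 * Real.log B * m) * B ^ ((m : ℝ) * (3 * s' - 1)))))) := by
          gcongr
      _ = (Z * ENNReal.ofReal (2 ^ (2 * s))) * ENNReal.ofReal (((m : ℝ) + 1) * (H m ^ (-X) *
          (Real.exp (ε / 2 * Real.log B * m) * B ^ ((m : ℝ) * (3 * s' - 1))))) := by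
          have hH0 : 0 < H m := by linarith [hH1 m]
          rw [ENNReal.ofReal_mul (p := (m : ℝ) + 1) (by positivity),
            ENNReal.ofReal_mul (p := H m ^ (-X)) (by positivity),
            show ENNReal.ofReal ((m : ℝ) + 1) = ((m + 1 : ℕ) : ENNReal) by
              rw [← Nat.cast_add_one, ENNReal.ofReal_natCast]]
          ring
      _ ≤ c m := by
          simp only [c]
          gcongr
          have h1 : H m ^ (-X) ≤ B ^ (-((m : ℝ) * (X - ε))) := by
            have : B ^ (-((m : ℝ) * (X - ε))) = (b ^ m) ^ (-X) := by
              rw [Real.rpow_neg hB0.le, Real.rpow_neg (by positivity), ← Real.rpow_natCast b,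
                ← Real.rpow_mul hb0.le, mul_comm (m : ℝ) X, Real.rpow_mul hb0.le, hbX,
                ← Real.rpow_mul hB0.le, mul_comm (X - ε)]
            rw [this]
            exact Real.rpow_le_rpow_of_nonpos (by positivity)
              (pow_le_pow_right₀ hb1.le (by omega)) (by linarith)
          have h2 : Real.exp (ε / 2 * Real.log B * m) = B ^ (ε / 2 * m) := by
            rw [Real.rpow_def_of_pos hB0]; congr 1; ring
          rw [h2]
          calc _ ≤ B ^ (-((m : ℝ) * (X - ε))) * (B ^ (ε / 2 * m) * B ^ ((m : ℝ) * (3 * s' - 1))) := by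
                gcongr
            _ = θ ^ m := by
                rw [hθ, ← Real.rpow_natCast, ← Real.rpow_mul hB0.le, ← Real.rpow_add hB0,
                  ← Real.rpow_add hB0]
                congr 1; rw [hX, hε]; ring
  · simp only [c]
    rw [ENNReal.tsum_mul_left]
    refine ENNReal.mul_ne_top (ENNReal.mul_ne_top hZt ENNReal.ofReal_ne_top) ?_
    have h1 : Summable (fun m : ℕ => ((m : ℝ) + 1) * θ ^ m) := by
      have hn : ‖θ‖ < 1 := by rw [Real.norm_of_nonneg hθ0.le]; exact hθ1
      have := (summable_pow_mul_geometric_of_norm_lt_one 1 hn).add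
        (summable_geometric_of_norm_lt_one hn)
      refine this.congr (fun m => ?_)
      simp; ring
    exact h1.tsum_ofReal_ne_top
  · rintro x ⟨hx, hxi, hinf⟩
    rw [frequently_atTop]
    intro m0
    have hev := hψ b hb1 hbB
    obtain ⟨n0, hn0⟩ := eventually_atTop.1 hev
    have htop : Tendsto ψ atTop atTop :=
      tendsto_atTop_mono' _ hev (tendsto_pow_atTop_atTop_of_one_lt hb1)
    -- a bound for the first digits
    let L := m0 + n0 + 2
    let C : ℝ := ∑ j ∈ Finset.range (L + 1), (pq x j : ℝ)
    obtain ⟨n1, hn1⟩ := eventually_atTop.1 (htop.eventually_gt_atTop C)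
    obtain ⟨n, hn, hnn⟩ := hinf.exists_gt n1
    have hbig : ∀ j, ψ n ≤ (pq x j : ℝ) → L < j := by
      intro j hj
      by_contra hlt
      have h1 : (pq x j : ℝ) ≤ C := Finset.single_le_sum (f := fun j => (pq x j : ℝ))
        (fun i _ => Nat.cast_nonneg _) (Finset.mem_range.2 (by omega))
      linarith [hn1 n hnn.le]
    have hkl : ∃ k l : ℕ, 1 ≤ k ∧ k < l ∧ l ≤ n ∧ ψ n ≤ (pq x k : ℝ) ∧ ψ n ≤ (pq x l : ℝ) := by
      obtain ⟨k, l, h1, h2, h3, h4, h5, h6, h7⟩ := hn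
      rcases lt_or_gt_of_ne h5 with h | h
      · exact ⟨k, l, h1, h, h4, h6, h7⟩
      · exact ⟨l, k, h3, h, h2, h7, h6⟩
    obtain ⟨k, l, hk1, hkl, hln, hψk, hψl⟩ := hkl
    have hl := hbig l hψl
    obtain ⟨m, rfl⟩ : ∃ m, l = m + 2 := ⟨l - 2, by omega⟩
    obtain ⟨k', rfl⟩ : ∃ k', k = k' + 1 := ⟨k - 1, by omega⟩
    refine ⟨m, by omega, ?_⟩
    have hHψ : H m ≤ ψ n := (hn0 (m + 2) (by omega)).trans (hψmono hln)
    let pd : ℕ → ℕ+ := fun i => ⟨pq x (i + 1), pq_pos hx hxi _⟩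
    refine mem_iUnion.2 ⟨⟨⟨k', by omega⟩, fun i => pd i, pd k', fun i => pd (k' + (1 + i))⟩, ?_⟩
    refine ⟨hHψ.trans hψk, hx, hxi, ?_⟩
    have e : wl (fun i : Fin k' => pd i) ++ ((pd k' : ℕ) :: wl (fun i : Fin (m - k') => pd (k' + (1 + i))))
        = pre (fun i => pq x (i + 1)) (m + 1) := by
      rw [show m + 1 = k' + (1 + (m - k')) by omega, pre_add, pre_add, pre_ofFn, pre_ofFn, pre_ofFn]
      simp [wl, pd]
    have e2 : (wl (fun i : Fin k' => pd i) ++ ((pd k' : ℕ) ::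
        wl (fun i : Fin (m - k') => pd (k' + (1 + i))))).length = m + 1 := by
      rw [e, pre_length]
    change pre _ (wl (fun i : Fin k' => pd i) ++ ((pd k' : ℕ) ::
        wl (fun i : Fin (m - k') => pd (k' + (1 + i))))).length = _ ∧
        H m ≤ pq x ((wl (fun i : Fin k' => pd i) ++ ((pd k' : ℕ) ::
        wl (fun i : Fin (m - k') => pd (k' + (1 + i))))).length + 1)
    rw [e2]
    exact ⟨e.symm, hHψ.trans hψl⟩


/-! ### Lower bound: the symbolic set-up -/

instance pnatMS : MeasurableSpace ℕ+ := ⊤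

instance pnatDMS : DiscreteMeasurableSpace ℕ+ := ⟨fun _ => trivial⟩

/-- Blocks of length `K + 2`. -/
abbrev Bk (K : ℕ) := Fin (K + 2) → ℕ+

/-- The digits attached to a sequence of blocks. -/
def dig {K : ℕ} (ω : ℕ → Bk K) (n : ℕ) : ℕ :=
  (ω (n / (K + 2)) ⟨n % (K + 2), Nat.mod_lt _ (by omega)⟩ : ℕ+)

theorem dig_pos {K : ℕ} (ω : ℕ → Bk K) (n : ℕ) : 1 ≤ dig ω n := PNat.pos _

theorem dig_at {K : ℕ} (ω : ℕ → Bk K) (i : ℕ) (j : Fin (K + 2)) :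
    dig ω ((K + 2) * i + j) = (ω i j : ℕ) := by
  have h1 : ((K + 2) * i + j) / (K + 2) = i := by
    rw [Nat.mul_add_div (by omega), Nat.div_eq_of_lt j.2, add_zero]
  have h2 : ((K + 2) * i + j) % (K + 2) = j := by
    rw [Nat.mul_add_mod, Nat.mod_eq_of_lt j.2]
  simp only [dig, h1, h2]

theorem dig_lt {K : ℕ} {ω ω' : ℕ → Bk K} {m : ℕ} (h : ∀ i < m, ω i = ω' i) (n : ℕ)
    (hn : n < (K + 2) * m) : dig ω n = dig ω' n := by
  rw [dig, dig, h _ (Nat.div_lt_of_lt_mul hn)]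

theorem pre_dig_succ {K : ℕ} (ω : ℕ → Bk K) (i : ℕ) :
    pre (dig ω) ((K + 2) * (i + 1)) = pre (dig ω) ((K + 2) * i) ++ wl (ω i) := by
  rw [mul_add, mul_one, pre_add, pre_ofFn _ (K + 2), wl]
  simp_rw [dig_at]

/-- The continuant at the end of block `m`. -/
def qq {K : ℕ} (ω : ℕ → Bk K) (m : ℕ) : ℝ := cQ (pre (dig ω) ((K + 2) * m))

theorem qq_one_le {K : ℕ} (ω : ℕ → Bk K) (m : ℕ) : 1 ≤ qq ω m := by
  unfold qq
  exact_mod_cast cQ_pos _ (pre_pos (dig_pos ω) _)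

theorem qq_ge {K : ℕ} (ω : ℕ → Bk K) (m : ℕ) : (m : ℝ) ≤ qq ω m := by
  have := length_le_cQ _ (pre_pos (dig_pos ω) ((K + 2) * m))
  rw [pre_length] at this
  have h2 : m ≤ cQ (pre (dig ω) ((K + 2) * m)) := by nlinarith
  unfold qq
  exact_mod_cast h2

theorem qq_succ_le {K : ℕ} (ω : ℕ → Bk K) (m : ℕ) :
    qq ω (m + 1) ≤ 2 * (qq ω m * cQ (wl (ω m))) := by
  rw [qq, qq, pre_dig_succ]
  exact_mod_cast cQ_append_le _ _ (pre_pos (dig_pos ω) _) (wl_pos _)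

theorem cQ_le_prod (w : List ℕ) (hw : ∀ a ∈ w, 1 ≤ a) : cQ w ≤ (w.map (fun a => a + 1)).prod := by
  induction w with
  | nil => simp [cQ_nil]
  | cons a w ih =>
    have h := ih (fun b hb => hw b (by simp [hb]))
    have h2 := cP_le_cQ w (fun b hb => hw b (by simp [hb]))
    rw [cQ_cons, List.map_cons, List.prod_cons]
    nlinarith

theorem cQ_le_pow (w : List ℕ) (hw : ∀ a ∈ w, 1 ≤ a) (M : ℕ) (hM : ∀ a ∈ w, a ≤ M) :
    cQ w ≤ (M + 1) ^ w.length := by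
  refine (cQ_le_prod w hw).trans ?_
  have := List.prod_le_pow_card (w.map (fun a => a + 1)) (M + 1) (by
    intro x hx
    obtain ⟨a, ha, rfl⟩ := List.mem_map.1 hx
    have := hM a ha; omega)
  simpa using this

/-- The block `(u, v, 1, …, 1)`. -/
def bigW (K : ℕ) (u v : ℕ+) : Bk K := Fin.cons u (Fin.cons v (fun _ => 1))

theorem bigW_zero (K : ℕ) (u v : ℕ+) : bigW K u v 0 = u := rfl
theorem bigW_one (K : ℕ) (u v : ℕ+) : bigW K u v 1 = v := rfl
theorem bigW_other (K : ℕ) (u v : ℕ+) (j : Fin (K + 2)) (h : 2 ≤ (j : ℕ)) : bigW K u v j = 1 := by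
  obtain ⟨j, hj⟩ := j
  match j with
  | j + 2 => rfl

theorem bigW_cQ (K : ℕ) (u v : ℕ+) (H : ℕ) (hu : (u : ℕ) < 2 * H) (hv : (v : ℕ) < 2 * H) :
    (cQ (wl (bigW K u v)) : ℝ) ≤ 4 * 2 ^ K * H ^ 2 := by
  have h := cQ_le_prod (wl (bigW K u v)) (wl_pos _)
  have e : wl (bigW K u v) = (u : ℕ) :: (v : ℕ) :: List.replicate K 1 := by
    simp [wl, bigW, List.ofFn_succ, List.ofFn_const]
  rw [e, List.map_cons, List.map_cons, List.map_replicate, List.prod_cons, List.prod_cons,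
    List.prod_replicate, ← e] at h
  have h1 : cQ (wl (bigW K u v)) ≤ 2 * H * (2 * H * 2 ^ K) := h.trans (by gcongr <;> omega)
  have h2 : (cQ (wl (bigW K u v)) : ℝ) ≤ 2 * H * (2 * H * 2 ^ K) := by exact_mod_cast h1
  linarith

/-- The set of big blocks. -/
def bigF (K : ℕ) (H : ℕ+) : Finset (Bk K) :=
  (Finset.Ico H (2 * H) ×ˢ Finset.Ico H (2 * H)).image (fun p => bigW K p.1 p.2)

theorem mem_bigF {K : ℕ} {H : ℕ+} {w : Bk K} :
    w ∈ bigF K H ↔ ∃ u v, (H ≤ u ∧ u < 2 * H) ∧ (H ≤ v ∧ v < 2 * H) ∧ w = bigW K u v := by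
  simp only [bigF, Finset.mem_image, Finset.mem_product, Finset.mem_Ico, Prod.exists]
  constructor
  · rintro ⟨u, v, ⟨h1, h2⟩, rfl⟩; exact ⟨u, v, h1, h2, rfl⟩
  · rintro ⟨u, v, h1, h2, rfl⟩; exact ⟨u, v, ⟨h1, h2⟩, rfl⟩

theorem card_Ico_H (H : ℕ+) : (Finset.Ico H (2 * H)).card = H := by
  rw [PNat.card_Ico, PNat.mul_coe]; change 2 * (H : ℕ) - H = H; omega

theorem bigF_card (K : ℕ) (H : ℕ+) : (bigF K H).card = (H : ℕ) ^ 2 := by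
  rw [bigF, Finset.card_image_of_injective, Finset.card_product, card_Ico_H, sq]
  rintro ⟨u, v⟩ ⟨u', v'⟩ h
  have h0 := congrFun h 0
  have h1 := congrFun h 1
  simp only [bigW_zero, bigW_one] at h0 h1
  rw [h0, h1]

theorem bigF_nonempty (K : ℕ) (H : ℕ+) : (bigF K H).Nonempty := by
  rw [← Finset.card_pos, bigF_card]; have := H.pos; positivity

theorem card_near (H u0 : ℕ+) (R : ℝ) (hR : 1 ≤ R) :
    (((Finset.Ico H (2 * H)).filter (fun u : ℕ+ => |(u : ℝ) - (u0 : ℝ)| ≤ R)).card : ℝ) ≤ 3 * R := by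
  have h : ((Finset.Ico H (2 * H)).filter (fun u : ℕ+ => |(u : ℝ) - (u0 : ℝ)| ≤ R)).card ≤
      (Finset.Icc ((u0 : ℤ) - ⌊R⌋₊) ((u0 : ℤ) + ⌊R⌋₊)).card := by
    apply Finset.card_le_card_of_injOn (fun u : ℕ+ => ((u : ℕ) : ℤ))
    · intro u hu
      have hu := (Finset.mem_filter.1 (Finset.mem_coe.1 hu)).2
      have h2 : ((u : ℕ) : ℤ) - ((u0 : ℕ) : ℤ) ≤ ⌊R⌋ := by
        rw [Int.le_floor]; push_cast; exact (abs_le.1 hu).2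
      have h3 : ((u0 : ℕ) : ℤ) - ((u : ℕ) : ℤ) ≤ ⌊R⌋ := by
        rw [Int.le_floor]; push_cast; linarith [(abs_le.1 hu).1]
      have h4 : (⌊R⌋₊ : ℤ) = ⌊R⌋ := Int.natCast_floor_eq_floor (by linarith)
      rw [Finset.coe_Icc, Set.mem_Icc, h4]
      constructor <;> dsimp only <;> omega
    · intro a _ b _ hab
      dsimp only at hab
      exact PNat.coe_injective (by exact_mod_cast hab)
  have h2 : (Finset.Icc ((u0 : ℤ) - ⌊R⌋₊) ((u0 : ℤ) + ⌊R⌋₊)).card = 2 * ⌊R⌋₊ + 1 := by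
    rw [Int.card_Icc]; omega
  rw [h2] at h
  have h3 := Nat.floor_le (show (0 : ℝ) ≤ R by linarith)
  have h4 : (((Finset.Ico H (2 * H)).filter (fun u : ℕ+ => |(u : ℝ) - (u0 : ℝ)| ≤ R)).card : ℝ) ≤
    2 * ⌊R⌋₊ + 1 := by exact_mod_cast h
  linarith

/-- The uniform distribution on big blocks. -/
noncomputable def bigP (K : ℕ) (H : ℕ+) : PMF (Bk K) :=
  PMF.uniformOfFinset (bigF K H) (bigF_nonempty K H)

theorem bigP_apply {K : ℕ} {H : ℕ+} {w : Bk K} (h : w ∈ bigF K H) :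
    bigP K H w = ENNReal.ofReal (((H : ℝ) ^ 2)⁻¹) := by
  have : (0 : ℝ) < (H : ℝ) ^ 2 := by have : (0 : ℝ) < (H : ℕ) := by exact_mod_cast H.pos
                                     positivity
  rw [bigP, PMF.uniformOfFinset_apply_of_mem _ h, bigF_card, ENNReal.ofReal_inv_of_pos this]
  congr 1
  rw [← Nat.cast_pow, ENNReal.ofReal_natCast]

theorem mem_of_bigP {K : ℕ} {H : ℕ+} {w : Bk K} (h : bigP K H w ≠ 0) : w ∈ bigF K H := by
  by_contra hw
  exact h (PMF.uniformOfFinset_apply_of_notMem _ hw)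

theorem bigP_le {K : ℕ} {H : ℕ+} (T : Set (Bk K)) (P : Finset (ℕ+ × ℕ+))
    (hP : ∀ u v, (H ≤ u ∧ u < 2 * H) → (H ≤ v ∧ v < 2 * H) → bigW K u v ∈ T → (u, v) ∈ P) (c : ℝ)
    (hc : (P.card : ℝ) ≤ c * (H : ℝ) ^ 2) :
    (bigP K H).toMeasure T ≤ ENNReal.ofReal c := by
  classical
  have hH : (0 : ℝ) < (H : ℕ) := by exact_mod_cast H.pos
  rw [bigP, PMF.toMeasure_uniformOfFinset_apply _ _ (MeasurableSet.of_discrete), bigF_card]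
  have h1 : ((bigF K H).filter (fun x => x ∈ T)).card ≤ P.card := by
    refine (Finset.card_le_card (t := P.image (fun p => bigW K p.1 p.2)) ?_).trans
      Finset.card_image_le
    intro w hw
    obtain ⟨hw, hT⟩ := Finset.mem_filter.1 hw
    obtain ⟨u, v, hu, hv, rfl⟩ := mem_bigF.1 hw
    exact Finset.mem_image.2 ⟨(u, v), hP u v hu hv hT, rfl⟩
  have h2 : (((bigF K H).filter (fun x => x ∈ T)).card : ℝ) ≤ c * (H : ℝ) ^ 2 :=
    le_trans (by exact_mod_cast h1) hc
  apply ENNReal.div_le_of_le_mul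
  rw [← ENNReal.ofReal_natCast, ← ENNReal.ofReal_natCast, ← ENNReal.ofReal_mul']
  · apply ENNReal.ofReal_le_ofReal
    push_cast
    convert h2
  · positivity

/-- Uniform blocks: deviation of the first digit. -/
theorem bigP_first (K : ℕ) (H u0 : ℕ+) (R : ℝ) (hR : 1 ≤ R) :
    (bigP K H).toMeasure {w | |((w 0 : ℕ) : ℝ) - (u0 : ℕ)| ≤ R} ≤ ENNReal.ofReal (3 * R / H) := by
  classical
  have hH : (0 : ℝ) < (H : ℕ) := by exact_mod_cast H.pos
  refine bigP_le _ (((Finset.Ico H (2 * H)).filter (fun u : ℕ+ => |(u : ℝ) - (u0 : ℝ)| ≤ R)) ×ˢ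
    Finset.Ico H (2 * H)) ?_ _ ?_
  · intro u v hu hv h
    rw [Finset.mem_product, Finset.mem_filter, Finset.mem_Ico, Finset.mem_Ico]
    exact ⟨⟨hu, h⟩, hv⟩
  · rw [Finset.card_product, card_Ico_H, Nat.cast_mul]
    have := card_near H u0 R hR
    rw [show 3 * R / (H : ℝ) * (H : ℝ) ^ 2 = 3 * R * H by field_simp]
    gcongr

theorem bigP_second (K : ℕ) (H u0 v0 : ℕ+) (R : ℝ) (hR : 1 ≤ R) :
    (bigP K H).toMeasure {w | w 0 = u0 ∧ |((w 1 : ℕ) : ℝ) - (v0 : ℕ)| ≤ R} ≤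
      ENNReal.ofReal (min (H : ℝ) (3 * R) / (H : ℝ) ^ 2) := by
  classical
  have hH : (0 : ℝ) < (H : ℕ) := by exact_mod_cast H.pos
  refine bigP_le _ ({u0} ×ˢ
    ((Finset.Ico H (2 * H)).filter (fun u : ℕ+ => |(u : ℝ) - (v0 : ℝ)| ≤ R))) ?_ _ ?_
  · intro u v hu hv h
    rw [Finset.mem_product, Finset.mem_filter, Finset.mem_Ico, Finset.mem_singleton]
    exact ⟨h.1, hv, h.2⟩
  · rw [Finset.card_product, Finset.card_singleton, one_mul,
      div_mul_cancel₀ _ (by positivity)]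
    refine le_min ?_ (card_near H v0 R hR)
    have := Finset.card_filter_le (Finset.Ico H (2 * H)) (fun u : ℕ+ => |(u : ℝ) - (v0 : ℝ)| ≤ R)
    rw [card_Ico_H] at this
    exact_mod_cast this

/-! ### The product measure -/

/-- The product measure. -/
noncomputable def nu {K : ℕ} (p : ℕ → PMF (Bk K)) : Measure (ℕ → Bk K) :=
  Measure.infinitePi (fun i => (p i).toMeasure)

instance nuProb {K : ℕ} (p : ℕ → PMF (Bk K)) : IsProbabilityMeasure (nu p) := by
  unfold nu; infer_instance

/-- The support. -/
def supp {K : ℕ} (p : ℕ → PMF (Bk K)) : Set (ℕ → Bk K) := {ω | ∀ i, p i (ω i) ≠ 0}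

theorem nu_cyl {K : ℕ} (p : ℕ → PMF (Bk K)) (ω : ℕ → Bk K) (m : ℕ) (T : Set (Bk K)) :
    nu p {ω' | (∀ i < m, ω' i = ω i) ∧ ω' m ∈ T} =
      (∏ i ∈ Finset.range m, p i (ω i)) * (p m).toMeasure T := by
  have e : {ω' : ℕ → Bk K | (∀ i < m, ω' i = ω i) ∧ ω' m ∈ T} =
      Set.pi (Finset.range (m + 1) : Finset ℕ) (fun i => if i = m then T else {ω i}) := by
    ext ω'
    simp only [mem_ofPred_eq, Set.mem_pi, Finset.coe_range, mem_Iio]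
    constructor
    · rintro ⟨h1, h2⟩ i hi
      by_cases him : i = m
      · subst him; simpa using h2
      · simpa [him] using h1 i (by omega)
    · intro h
      refine ⟨fun i hi => ?_, by simpa using h m (by omega)⟩
      have := h i (by omega)
      simpa [hi.ne] using this
  rw [e, nu, Measure.infinitePi_pi _ (fun i _ => MeasurableSet.of_discrete), Finset.prod_range_succ]
  simp only [if_true]
  congr 1
  apply Finset.prod_congr rfl
  intro i hi
  rw [if_neg (Finset.mem_range.1 hi).ne, PMF.toMeasure_apply_singleton _ _ (MeasurableSet.of_discrete)]

theorem nu_supp {K : ℕ} (p : ℕ → PMF (Bk K)) : nu p (supp p)ᶜ = 0 := by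
  have : (supp p)ᶜ = ⋃ i, (fun ω : ℕ → Bk K => ω i) ⁻¹' {w | p i w = 0} := by
    ext ω; simp [supp]
  rw [this, measure_iUnion_null_iff]
  intro i
  rw [← Measure.map_apply (measurable_pi_apply i) MeasurableSet.of_discrete, nu,
    Measure.infinitePi_map_eval, PMF.toMeasure_apply_eq_zero_iff _ MeasurableSet.of_discrete,
    Set.disjoint_left]
  intro w hw h
  exact (PMF.mem_support_iff _ _).1 hw h

/-- The coding map. -/
noncomputable def code {K : ℕ} (ω : ℕ → Bk K) : ℝ := cf (dig ω)

theorem code_measurable {K : ℕ} : Measurable (code (K := K)) := by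
  refine measurable_of_tendsto_metrizable (f := fun n ω => phi (pre (dig ω) n) 0) ?_
    (tendsto_pi_nhds.2 fun ω => cf_tendsto (dig_pos ω))
  intro n
  have h1 : ∀ l : List ℕ, Measurable (fun ω : ℕ → Bk K => phi (l.map (dig ω)) 0) := by
    intro l
    induction l with
    | nil => exact measurable_const
    | cons a l ih =>
      simp only [List.map_cons, phi]
      have : Measurable (fun ω : ℕ → Bk K => (dig ω a : ℝ)) := by
        have h2 : Measurable (fun w : ℕ+ => ((w : ℕ) : ℝ)) := Measurable.of_discrete
        exact h2.comp ((measurable_pi_apply _).comp (measurable_pi_apply _))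
      exact measurable_const.div (this.add ih)
  exact h1 _


theorem min_one_le_rpow (y s : ℝ) (hy : 0 ≤ y) (hs0 : 0 ≤ s) (hs1 : s ≤ 1) : min 1 y ≤ y ^ s := by
  rcases le_total 1 y with h | h
  · exact (min_le_left _ _).trans (Real.one_le_rpow h hs0)
  · refine (min_le_right _ _).trans ?_
    rcases hy.eq_or_lt with h0 | h0
    · rw [← h0]; exact Real.rpow_nonneg le_rfl _
    · calc y = y ^ (1 : ℝ) := (Real.rpow_one y).symm
        _ ≤ y ^ s := Real.rpow_le_rpow_of_exponent_ge h0 h hs1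

theorem q_cancel (q X s Y : ℝ) (hq : 1 ≤ q) (hX : 0 ≤ X) (hY : 0 ≤ Y) :
    q ^ (-(2 * s)) * (X * q ^ 2 * Y) ^ s = X ^ s * Y ^ s := by
  have hq0 : 0 < q := by linarith
  have hqs : 0 < q ^ (2 * s) := Real.rpow_pos_of_pos hq0 _
  rw [Real.mul_rpow (by positivity) hY, Real.mul_rpow hX (by positivity), ← Real.rpow_natCast q,
    ← Real.rpow_mul hq0.le, Real.rpow_neg hq0.le]
  push_cast
  field_simp

theorem est_one (α C q X s : ℝ) (hα : α ≤ C) (hC : 0 ≤ C) (hq : 1 ≤ q) (hX : 0 ≤ X) (hs : 0 ≤ s)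
    (h : 1 ≤ X * q ^ 2) : α * q ^ (-(2 * s)) ≤ C * X ^ s := by
  have hq0 : 0 < q := by linarith
  have h1 := q_cancel q X s 1 hq hX zero_le_one
  rw [mul_one, Real.one_rpow, mul_one] at h1
  have h2 : 1 ≤ (X * q ^ 2) ^ s := Real.one_le_rpow h hs
  have h3 : 0 < q ^ (-(2 * s)) := Real.rpow_pos_of_pos hq0 _
  have h4 : q ^ (-(2 * s)) ≤ X ^ s := by nlinarith
  calc α * q ^ (-(2 * s)) ≤ C * q ^ (-(2 * s)) := by gcongr
    _ ≤ _ := by gcongr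

theorem est_two (α q X s H : ℝ) (hα : α ≤ H ^ (-(3 * s - 1))) (hq : 1 ≤ q) (hX : 0 ≤ X)
    (hs : 1 / 2 ≤ s) (hs1 : s ≤ 1) (hH : 1 ≤ H) :
    α * q ^ (-(2 * s)) * min 1 (X * q ^ 2 * H) ≤ X ^ s := by
  have hq0 : 0 < q := by linarith
  have hH0 : 0 < H := by linarith
  have hXs : 0 ≤ X ^ s := Real.rpow_nonneg hX _
  have hy : 0 ≤ X * q ^ 2 * H := by positivity
  calc α * q ^ (-(2 * s)) * min 1 (X * q ^ 2 * H)
      ≤ H ^ (-(3 * s - 1)) * q ^ (-(2 * s)) * (X * q ^ 2 * H) ^ s := by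
        gcongr
        exact min_one_le_rpow _ _ hy (by linarith) hs1
    _ = X ^ s * (H ^ (-(3 * s - 1)) * H ^ s) := by
        rw [mul_assoc, q_cancel q X s H hq hX hH0.le]; ring
    _ ≤ X ^ s * 1 := by
        gcongr
        rw [← Real.rpow_add hH0]
        exact Real.rpow_le_one_of_one_le_of_nonpos hH (by linarith)
    _ = _ := mul_one _

theorem est_three (α q X s H : ℝ) (hα : α ≤ H ^ (-(3 * s - 1))) (hq : 1 ≤ q) (hX : 0 ≤ X)
    (hs : 1 / 2 ≤ s) (hs1 : s ≤ 1) (hH : 1 ≤ H) :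
    α * q ^ (-(2 * s)) * (H⁻¹ * min 1 (X * q ^ 2 * H ^ 3)) ≤ X ^ s := by
  have hq0 : 0 < q := by linarith
  have hH0 : 0 < H := by linarith
  have hXs : 0 ≤ X ^ s := Real.rpow_nonneg hX _
  have hy : 0 ≤ X * q ^ 2 * H ^ 3 := by positivity
  calc α * q ^ (-(2 * s)) * (H⁻¹ * min 1 (X * q ^ 2 * H ^ 3))
      ≤ H ^ (-(3 * s - 1)) * q ^ (-(2 * s)) * (H⁻¹ * (X * q ^ 2 * H ^ 3) ^ s) := by
        gcongr
        exact min_one_le_rpow _ _ hy (by linarith) hs1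
    _ = X ^ s * (H ^ (-(3 * s - 1)) * (H⁻¹ * (H ^ 3) ^ s)) := by
        rw [show H ^ (-(3 * s - 1)) * q ^ (-(2 * s)) * (H⁻¹ * (X * q ^ 2 * H ^ 3) ^ s) =
          H ^ (-(3 * s - 1)) * H⁻¹ * (q ^ (-(2 * s)) * (X * q ^ 2 * H ^ 3) ^ s) by ring,
          q_cancel q X s (H ^ 3) hq hX (by positivity)]; ring
    _ = X ^ s * 1 := by
        congr 1
        rw [← Real.rpow_neg_one H, ← Real.rpow_natCast H, ← Real.rpow_mul hH0.le,
          ← Real.rpow_add hH0, ← Real.rpow_add hH0]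
        rw [show -(3 * s - 1) + (-1 + ((3 : ℕ) : ℝ) * s) = 0 by push_cast; ring, Real.rpow_zero]
    _ = _ := mul_one _

section
variable {K : ℕ} (p : ℕ → PMF (Bk K)) (big : ℕ → Prop) (H : ℕ → ℕ+) (M : ℕ)

theorem tail_ok (hH : ∀ i, 2 ≤ (H i : ℕ)) (hM : 1 ≤ M)
    (hnorm : ∀ i, ¬ big i → ∀ w, p i w ≠ 0 → ∀ j, (w j : ℕ) ≤ M)
    (hbig : ∀ i, big i → p i = bigP K (H i)) (ω ω' : ℕ → Bk K) (h : ω ∈ supp p) (h' : ω' ∈ supp p)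
    (n : ℕ) : (dig ω n ≤ M ∧ dig ω' n ≤ M) ∨ (2 ≤ dig ω n ∧ 2 ≤ dig ω' n) := by
  have e : n = (K + 2) * (n / (K + 2)) + ((⟨n % (K + 2), Nat.mod_lt _ (by omega)⟩ : Fin (K + 2)) : ℕ) :=
    (Nat.div_add_mod n (K + 2)).symm
  rw [e, dig_at, dig_at]
  generalize (⟨n % (K + 2), Nat.mod_lt _ (by omega)⟩ : Fin (K + 2)) = j
  generalize n / (K + 2) = i
  by_cases hi : big i
  · have hp := hbig i hi
    have h1 := h i
    have h1' := h' i
    rw [hp] at h1 h1'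
    obtain ⟨u, v, hu, hv, e⟩ := mem_bigF.1 (mem_of_bigP h1)
    obtain ⟨u', v', hu', hv', e'⟩ := mem_bigF.1 (mem_of_bigP h1')
    rw [e, e']
    have hHi := hH i
    have c1 : (H i : ℕ) ≤ u := hu.1
    have c2 : (H i : ℕ) ≤ v := hv.1
    have c3 : (H i : ℕ) ≤ u' := hu'.1
    have c4 : (H i : ℕ) ≤ v' := hv'.1
    by_cases hj : 2 ≤ (j : ℕ)
    · left
      rw [bigW_other _ _ _ _ hj, bigW_other _ _ _ _ hj]
      exact ⟨hM, hM⟩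
    · right
      have : j = 0 ∨ j = 1 := by
        obtain ⟨j, hj'⟩ := j
        simp only [not_le] at hj
        rcases (by omega : j = 0 ∨ j = 1) with rfl | rfl
        · left; rfl
        · right; rfl
      rcases this with rfl | rfl
      · rw [bigW_zero, bigW_zero]; omega
      · rw [bigW_one, bigW_one]; omega
  · left
    exact ⟨hnorm i hi _ (h i) j, hnorm i hi _ (h' i) j⟩

theorem holder (hH : ∀ i, 2 ≤ (H i : ℕ)) (hM : 1 ≤ M)
    (hnorm : ∀ i, ¬ big i → ∀ w, p i w ≠ 0 → ∀ j, (w j : ℕ) ≤ M)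
    (hbig : ∀ i, big i → p i = bigP K (H i)) (s : ℝ) (hs : 1 / 2 ≤ s) (hs1 : s ≤ 1)
    (α : ℕ → ℝ) (hα0 : ∀ i, 0 < α i) (C : ℝ) (hαC : ∀ i, α i ≤ C)
    (hαb : ∀ i, big i → α i ≤ (H i : ℝ) ^ (-(3 * s - 1)))
    (hW : ∀ ω ∈ supp p, ∀ m, ∏ i ∈ Finset.range m, p i (ω i) ≤
      ENNReal.ofReal (α m * qq ω m ^ (-(2 * s)))) :
    ∃ D : ℝ, 0 < D ∧ ∀ S : Set ℝ, Metric.ediam S ≤ 1 →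
      nu p (code ⁻¹' S ∩ supp p) ≤ ENNReal.ofReal D * Metric.ediam S ^ s := by
  have hC : 0 < C := (hα0 0).trans_le (hαC 0)
  let Dm : ℝ := (M + 1) * (2 * (M + 1) ^ (K + 2)) ^ 2 * (M + 2) ^ 2 + 768 * (M + 1)
  have hDm : 0 < Dm := by positivity
  refine ⟨(C + 1) * Dm ^ s, by positivity, ?_⟩
  intro S hS
  have hSt : Metric.ediam S ≠ ⊤ := ne_top_of_le_ne_top ENNReal.one_ne_top hS
  set r := (Metric.ediam S).toReal with hr
  have hr0 : 0 ≤ r := ENNReal.toReal_nonneg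
  have hSr : Metric.ediam S ^ s = ENNReal.ofReal (r ^ s) := by
    rw [← ENNReal.ofReal_toReal hSt, ENNReal.ofReal_rpow_of_nonneg hr0 (by linarith)]
  rw [hSr, ← ENNReal.ofReal_mul (by positivity)]
  set X := Dm * r with hX
  have hX0 : 0 ≤ X := by positivity
  have hXs : (C + 1) * Dm ^ s * r ^ s = (C + 1) * X ^ s := by
    rw [hX, Real.mul_rpow hDm.le hr0]; ring
  have hXs0 : 0 ≤ X ^ s := Real.rpow_nonneg hX0 _
  rw [hXs]
  set P := code ⁻¹' S ∩ supp p with hP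
  rcases P.eq_empty_or_nonempty with he | ⟨ω0, hω0⟩
  · rw [he, measure_empty]; exact zero_le
  have hdist : ∀ ω ∈ P, |code ω0 - code ω| ≤ r := by
    intro ω hω
    have := Metric.edist_le_ediam_of_mem (x := code ω0) (y := code ω) (s := S) hω0.1 hω.1
    rw [edist_dist, Real.dist_eq] at this
    rw [hr]
    exact (ENNReal.ofReal_le_iff_le_toReal hSt).1 this
  by_cases hex : ∃ m, ∃ ω ∈ P, ω m ≠ ω0 m
  swap
  · -- a single point
    push Not at hex
    have h1 : ∀ m : ℕ, 1 ≤ m → nu p P ≤ ENNReal.ofReal (C * (m : ℝ)⁻¹) := by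
      intro m hm
      have hm1 : (1 : ℝ) ≤ m := by exact_mod_cast hm
      have h2 : P ⊆ {ω' | (∀ i < m, ω' i = ω0 i) ∧ ω' m ∈ (univ : Set (Bk K))} :=
        fun ω hω => ⟨fun i _ => hex i ω hω, trivial⟩
      refine (measure_mono h2).trans ?_
      rw [nu_cyl, measure_univ, mul_one]
      refine (hW ω0 hω0.2 m).trans (ENNReal.ofReal_le_ofReal ?_)
      have h3 := qq_ge ω0 m
      have h4 : 0 < qq ω0 m := by linarith
      have h5 : qq ω0 m ^ (-(2 * s)) ≤ (m : ℝ)⁻¹ := by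
        calc qq ω0 m ^ (-(2 * s)) ≤ qq ω0 m ^ (-1 : ℝ) :=
              Real.rpow_le_rpow_of_exponent_le (qq_one_le _ _) (by linarith)
          _ = (qq ω0 m)⁻¹ := Real.rpow_neg_one _
          _ ≤ _ := by gcongr
      have := hαC m
      gcongr
    have h2 : Tendsto (fun m : ℕ => ENNReal.ofReal (C * (m : ℝ)⁻¹)) atTop (nhds 0) := by
      have : Tendsto (fun m : ℕ => C * (m : ℝ)⁻¹) atTop (nhds (C * 0)) :=
        (tendsto_inv_atTop_nhds_zero_nat (𝕜 := ℝ)).const_mul C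
      rw [mul_zero] at this
      simpa using ENNReal.tendsto_ofReal this
    have h3 : nu p P ≤ 0 := ge_of_tendsto h2 (eventually_atTop.2 ⟨1, h1⟩)
    exact h3.trans zero_le
  classical
  let m := Nat.find hex
  obtain ⟨ω1, hω1, hne⟩ := Nat.find_spec hex
  have hagree : ∀ ω ∈ P, ∀ i < m, ω i = ω0 i := by
    intro ω hω i hi
    by_contra h
    exact Nat.find_min hex hi ⟨ω, hω, h⟩
  change ω1 m ≠ ω0 m at hne
  set q := qq ω0 m with hq
  have hq1 : 1 ≤ q := qq_one_le _ _
  have hsep : ∀ ω ∈ P, ∀ n, (∀ i < n, dig ω0 i = dig ω i) →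
      |(dig ω0 n : ℝ) - dig ω n| ≤
        r * ((M + 1) * ((cQ (pre (dig ω0) n) : ℝ) ^ 2 * ((dig ω0 n + 2) * (dig ω n + 2)))) := by
    intro ω hω n hn
    have h1 := cf_sep (dig_pos ω0) (dig_pos ω) M hM n hn
      (tail_ok p big H M hH hM hnorm hbig ω0 ω hω0.2 hω.2 (n + 1))
    have h2 := h1.trans (hdist ω hω)
    have h3 : (1 : ℝ) ≤ cQ (pre (dig ω0) n) := by exact_mod_cast cQ_pos _ (pre_pos (dig_pos ω0) n)
    rwa [div_le_iff₀ (by positivity)] at h2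
  have hcyl : ∀ T : Set (Bk K), (∀ ω ∈ P, ω m ∈ T) → ∀ t : ℝ, 0 ≤ t →
      (p m).toMeasure T ≤ ENNReal.ofReal t →
      nu p P ≤ ENNReal.ofReal (α m * q ^ (-(2 * s)) * t) := by
    intro T hT t ht hpt
    have h2 : P ⊆ {ω' | (∀ i < m, ω' i = ω0 i) ∧ ω' m ∈ T} :=
      fun ω hω => ⟨hagree ω hω, hT ω hω⟩
    refine (measure_mono h2).trans ?_
    rw [nu_cyl, ENNReal.ofReal_mul' ht]
    exact mul_le_mul' (hW ω0 hω0.2 m) hpt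
  have hone : ∀ (a b : ℕ+), a ≠ b → (1 : ℝ) ≤ |((a : ℕ) : ℝ) - ((b : ℕ) : ℝ)| := by
    intro a b hab
    have h1 : ((a : ℕ) : ℤ) - ((b : ℕ) : ℤ) ≠ 0 := by
      intro h
      exact hab (PNat.coe_injective (by omega))
    have h2 := Int.one_le_abs h1
    exact_mod_cast h2
  by_cases hb : big m
  · -- big block
    have hp := hbig m hb
    set h := H m with hh
    have hαm := hαb m hb
    have hh1 : (1 : ℝ) ≤ (h : ℕ) := by exact_mod_cast h.pos
    have hform : ∀ ω ∈ P, ∃ u v : ℕ+, (h ≤ u ∧ u < 2 * h) ∧ (h ≤ v ∧ v < 2 * h) ∧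
        ω m = bigW K u v := by
      intro ω hω
      have h1 := hω.2 m
      rw [hp] at h1
      exact mem_bigF.1 (mem_of_bigP h1)
    have hltH : ∀ u : ℕ+, u < 2 * h → ((u : ℕ) : ℝ) + 2 ≤ 4 * (h : ℕ) := by
      intro u hu
      have h1 : (u : ℕ) < 2 * h := hu
      have h2 := hH m
      have h3 : (u : ℕ) + 2 ≤ 4 * h := by rw [← hh] at h2; omega
      exact_mod_cast h3
    obtain ⟨u0, v0, hu0, hv0, e0⟩ := hform ω0 hω0
    have d0 : ∀ ω : ℕ → Bk K, dig ω ((K + 2) * m) = (ω m 0 : ℕ) := fun ω => dig_at ω m 0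
    have d1 : ∀ ω : ℕ → Bk K, dig ω ((K + 2) * m + 1) = (ω m 1 : ℕ) := fun ω => dig_at ω m 1
    by_cases hu : ∃ ω ∈ P, ω m 0 ≠ ω0 m 0
    · -- the first digit varies
      let R : ℝ := r * ((M + 1) * (q ^ 2 * ((4 * (h : ℕ)) * (4 * (h : ℕ)))))
      have hR : ∀ ω ∈ P, |((ω m 0 : ℕ) : ℝ) - (u0 : ℕ)| ≤ R := by
        intro ω hω
        obtain ⟨u, v, hu, hv, e⟩ := hform ω hω
        have h1 := hsep ω hω ((K + 2) * m)
          (fun i hi => (dig_lt (hagree ω hω) i hi).symm)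
        rw [d0, d0, e, e0, bigW_zero, bigW_zero] at h1
        rw [e, bigW_zero, abs_sub_comm]
        refine h1.trans ?_
        have c1 := hltH u hu.2
        have c2 := hltH u0 hu0.2
        change _ ≤ r * ((M + 1) * ((qq ω0 m) ^ 2 * ((4 * (h : ℕ)) * (4 * (h : ℕ)))))
        unfold qq
        gcongr
      obtain ⟨ω2, hω2, hne2⟩ := hu
      have hR1 : 1 ≤ R := by
        refine le_trans ?_ (hR ω2 hω2)
        rw [e0, bigW_zero] at hne2
        exact hone _ _ hne2
      have hest := est_two (α m) q X s h hαm hq1 hX0 hs hs1 hh1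
      have h3R : 3 * R / (h : ℕ) ≤ X * q ^ 2 * (h : ℕ) := by
        rw [div_le_iff₀ (by linarith)]
        have : 48 * ((M : ℝ) + 1) * r ≤ X := by
          rw [hX]
          gcongr
          have : 0 ≤ ((M : ℝ) + 1) * (2 * (M + 1) ^ (K + 2)) ^ 2 * (M + 2) ^ 2 := by positivity
          simp only [Dm]
          nlinarith [Nat.cast_nonneg (α := ℝ) M]
        calc 3 * R = 48 * ((M : ℝ) + 1) * r * (q ^ 2 * (h : ℕ) * (h : ℕ)) := by simp only [R]; ring
          _ ≤ X * (q ^ 2 * (h : ℕ) * (h : ℕ)) := by gcongr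
          _ = _ := by ring
      refine (hcyl {w | |((w 0 : ℕ) : ℝ) - (u0 : ℕ)| ≤ R} hR (min 1 (X * q ^ 2 * (h : ℕ)))
        (by positivity) ?_).trans (ENNReal.ofReal_le_ofReal (hest.trans ?_))
      · rw [ENNReal.ofReal_min, ENNReal.ofReal_one]
        refine le_min prob_le_one ?_
        rw [hp]
        exact (bigP_first K h u0 R hR1).trans (ENNReal.ofReal_le_ofReal h3R)
      · nlinarith
    · push Not at hu
      have hv : ω1 m 1 ≠ ω0 m 1 := by
        intro hv
        apply hne
        obtain ⟨u, v, _, _, e⟩ := hform ω1 hω1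
        have c := hu ω1 hω1
        rw [e, e0, bigW_zero, bigW_zero] at c
        rw [e, e0, bigW_one, bigW_one] at hv
        rw [e, e0, c, hv]
      let R : ℝ := r * ((M + 1) * ((4 * (q * (h : ℕ))) ^ 2 * ((4 * (h : ℕ)) * (4 * (h : ℕ)))))
      have hq2 : (cQ (pre (dig ω0) ((K + 2) * m + 1)) : ℝ) ≤ 4 * (q * (h : ℕ)) := by
        have c : pre (dig ω0) ((K + 2) * m + 1) = pre (dig ω0) ((K + 2) * m) ++ [(u0 : ℕ)] := by
          have c1 := d0 ω0
          rw [e0, bigW_zero] at c1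
          rw [pre_add, ← c1]; simp [pre]
        have c2 := cQ_append_le (pre (dig ω0) ((K + 2) * m)) [(u0 : ℕ)] (pre_pos (dig_pos ω0) _)
          (by simp [Nat.one_le_iff_ne_zero])
        rw [← c] at c2
        have c3 : cQ [(u0 : ℕ)] = u0 := by simp [cQ_cons, cQ_nil, cP_nil]
        rw [c3] at c2
        have c4 : (u0 : ℕ) ≤ 2 * h := le_of_lt hu0.2
        have c5 : ((u0 : ℕ) : ℝ) ≤ 2 * (h : ℕ) := by exact_mod_cast c4
        have c6 : (cQ (pre (dig ω0) ((K + 2) * m + 1)) : ℝ) ≤ 2 * (q * (u0 : ℕ)) := by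
          rw [hq, qq]; exact_mod_cast c2
        nlinarith
      have hR : ∀ ω ∈ P, |((ω m 1 : ℕ) : ℝ) - (v0 : ℕ)| ≤ R := by
        intro ω hω
        obtain ⟨u, v, hu', hv, e⟩ := hform ω hω
        have h1 := hsep ω hω ((K + 2) * m + 1) (fun i hi => by
          rcases Nat.lt_succ_iff_lt_or_eq.1 hi with hi | rfl
          · exact (dig_lt (hagree ω hω) i hi).symm
          · rw [d0, d0, hu ω hω])
        rw [d1, d1, e, e0, bigW_one, bigW_one] at h1
        rw [e, bigW_one, abs_sub_comm]
        refine h1.trans ?_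
        have c1 := hltH v hv.2
        have c2 := hltH v0 hv0.2
        simp only [R]
        gcongr
      have hR1 : 1 ≤ R := by
        refine le_trans ?_ (hR ω1 hω1)
        rw [e0, bigW_one] at hv
        exact hone _ _ hv
      have hest := est_three (α m) q X s h hαm hq1 hX0 hs hs1 hh1
      have h3R : 3 * R ≤ X * q ^ 2 * (h : ℕ) ^ 4 := by
        have : 768 * ((M : ℝ) + 1) * r ≤ X := by
          rw [hX]
          gcongr
          have : 0 ≤ ((M : ℝ) + 1) * (2 * (M + 1) ^ (K + 2)) ^ 2 * (M + 2) ^ 2 := by positivity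
          simp only [Dm]
          linarith
        calc 3 * R = 768 * ((M : ℝ) + 1) * r * (q ^ 2 * (h : ℕ) ^ 4) := by simp only [R]; ring
          _ ≤ X * (q ^ 2 * (h : ℕ) ^ 4) := by gcongr
          _ = _ := by ring
      have hhpos : (0 : ℝ) < (h : ℕ) := by linarith
      refine (hcyl {w | w 0 = u0 ∧ |((w 1 : ℕ) : ℝ) - (v0 : ℕ)| ≤ R}
        (fun ω hω => ⟨by rw [hu ω hω, e0, bigW_zero], hR ω hω⟩)
        (((h : ℕ) : ℝ)⁻¹ * min 1 (X * q ^ 2 * (h : ℕ) ^ 3))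
        (by positivity) ?_).trans (ENNReal.ofReal_le_ofReal (hest.trans ?_))
      · rw [hp]
        refine (bigP_second K h u0 v0 R hR1).trans (ENNReal.ofReal_le_ofReal ?_)
        rw [div_le_iff₀ (by positivity)]
        calc min ((h : ℕ) : ℝ) (3 * R) ≤ min ((h : ℕ) : ℝ) (X * q ^ 2 * (h : ℕ) ^ 4) :=
              min_le_min_left _ h3R
          _ = (h : ℕ) * min 1 (X * q ^ 2 * (h : ℕ) ^ 3) := by
              rw [mul_min_of_nonneg _ _ hhpos.le, mul_one]; congr 1; ring
          _ = _ := by field_simp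
      · nlinarith
  · -- normal block
    have hj : ∃ j : ℕ, ∃ hj : j < K + 2, ω0 m ⟨j, hj⟩ ≠ ω1 m ⟨j, hj⟩ := by
      by_contra hcon
      push Not at hcon
      exact hne (funext fun j => (hcon j.1 j.2).symm)
    obtain ⟨hjlt, hjne⟩ := Nat.find_spec hj
    set j := Nat.find hj with hjdef
    have hag2 : ∀ i < (K + 2) * m + j, dig ω0 i = dig ω1 i := by
      intro i hi
      by_cases hi2 : i < (K + 2) * m
      · exact (dig_lt (hagree ω1 hω1) i hi2).symm
      · obtain ⟨k, rfl⟩ := Nat.exists_eq_add_of_le (not_lt.1 hi2)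
        have hk : k < j := by omega
        have c0 := dig_at ω0 m ⟨k, by omega⟩
        have c1 := dig_at ω1 m ⟨k, by omega⟩
        simp only at c0 c1
        rw [c0, c1]
        by_contra hcon
        exact Nat.find_min hj hk ⟨by omega, fun e => hcon (by rw [e])⟩
    have h1 := hsep ω1 hω1 _ hag2
    have c0 := dig_at ω0 m ⟨j, hjlt⟩
    have c1 := dig_at ω1 m ⟨j, hjlt⟩
    simp only at c0 c1
    rw [c0, c1] at h1
    have h2 := (hone _ _ hjne).trans h1
    have m0 : ((ω0 m ⟨j, hjlt⟩ : ℕ) : ℝ) ≤ M := by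
      exact_mod_cast hnorm m hb _ (hω0.2 m) _
    have m1 : ((ω1 m ⟨j, hjlt⟩ : ℕ) : ℝ) ≤ M := by
      exact_mod_cast hnorm m hb _ (hω1.2 m) _
    have hqn : (cQ (pre (dig ω0) ((K + 2) * m + j)) : ℝ) ≤ q * (2 * (M + 1) ^ (K + 2)) := by
      have a1 := cQ_append_le (pre (dig ω0) ((K + 2) * m))
        (pre (fun i => dig ω0 ((K + 2) * m + i)) j) (pre_pos (dig_pos ω0) _)
        (pre_pos (fun i => dig_pos ω0 _) _)
      rw [← pre_add] at a1
      have a2 := cQ_le_pow (pre (fun i => dig ω0 ((K + 2) * m + i)) j)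
        (pre_pos (fun i => dig_pos ω0 _) _) M (by
          intro a ha
          simp only [pre, List.mem_map, List.mem_range] at ha
          obtain ⟨i, hi, rfl⟩ := ha
          have c0 := dig_at ω0 m ⟨i, by omega⟩
          simp only at c0
          rw [c0]
          exact hnorm m hb _ (hω0.2 m) _)
      rw [pre_length] at a2
      have a3 : (M + 1) ^ j ≤ (M + 1) ^ (K + 2) := Nat.pow_le_pow_right (by omega) hjlt.le
      have a4 : cQ (pre (dig ω0) ((K + 2) * m + j)) ≤
          2 * (cQ (pre (dig ω0) ((K + 2) * m)) * (M + 1) ^ (K + 2)) :=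
        a1.trans (by gcongr; exact a2.trans a3)
      have a5 : (cQ (pre (dig ω0) ((K + 2) * m + j)) : ℝ) ≤ 2 * (q * (M + 1) ^ (K + 2)) := by
        rw [hq, qq]; exact_mod_cast a4
      linarith
    have h3 : 1 ≤ X * q ^ 2 := by
      refine h2.trans ?_
      calc _ ≤ r * ((M + 1) * ((q * (2 * (M + 1) ^ (K + 2))) ^ 2 * ((M + 2) * (M + 2)))) := by
            gcongr
        _ = (((M : ℝ) + 1) * (2 * (M + 1) ^ (K + 2)) ^ 2 * (M + 2) ^ 2) * r * q ^ 2 := by ring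
        _ ≤ X * q ^ 2 := by
            rw [hX]; gcongr
            simp only [Dm]
            have : 0 ≤ 768 * ((M : ℝ) + 1) := by positivity
            linarith
    have h4 := est_one (α m) C q X s (hαC m) hC.le hq1 hX0 (by linarith) h3
    have h5 := hcyl univ (fun _ _ => trivial) 1 zero_le_one (by
      rw [measure_univ, ENNReal.ofReal_one])
    refine h5.trans (ENNReal.ofReal_le_ofReal ?_)
    rw [mul_one]
    nlinarith

end


theorem exists_alpha (good : ℕ → Prop) (hgood : ∃ᶠ i in atTop, good i) (t : ℕ → ℝ) (ρ C : ℝ)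
    (hρ0 : 0 < ρ) (hρ1 : ρ < 1) (hC : 1 ≤ C)
    (ht : ∀ c : ℝ, 0 < c → ∀ᶠ i : ℕ in atTop, c * ρ ^ i ≤ t i) :
    ∃ (α : ℕ → ℝ) (big : ℕ → Prop), α 0 = 1 ∧ (∀ i, 0 < α i) ∧ (∀ i, α i ≤ C) ∧
      (∀ i, big i → good i ∧ α i ≤ t i ∧ α (i + 1) = C) ∧
      (∀ i, ¬ big i → α (i + 1) = α i * ρ) ∧ ∃ᶠ i in atTop, big i := by
  classical
  let α : ℕ → ℝ := fun n =>
    Nat.rec (motive := fun _ => ℝ) (1 : ℝ) (fun (i : ℕ) (a : ℝ) => if good i ∧ a ≤ t i then C else a * ρ) n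
  have hsucc : ∀ i : ℕ, α (i + 1) = (if good i ∧ α i ≤ t i then C else α i * ρ) := fun i => rfl
  have hpos : ∀ i, 0 < α i := by
    intro i
    induction i with
    | zero => exact one_pos
    | succ i ih =>
      rw [hsucc]
      split_ifs
      · linarith
      · positivity
  refine ⟨α, fun i => good i ∧ α i ≤ t i, rfl, hpos, ?_, ?_, ?_, ?_⟩
  · intro i
    induction i with
    | zero => exact hC
    | succ i ih =>
      rw [hsucc]
      split_ifs
      · exact le_rfl
      · nlinarith [hpos i]
  · intro i hi
    exact ⟨hi.1, hi.2, by rw [hsucc, if_pos hi]⟩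
  · intro i hi
    rw [hsucc, if_neg hi]
  · by_contra hcon
    rw [not_frequently] at hcon
    obtain ⟨j, hj⟩ := eventually_atTop.1 hcon
    have hgeo : ∀ k, α (j + k) = α j * ρ ^ k := by
      intro k
      induction k with
      | zero => simp
      | succ k ih =>
        rw [← add_assoc, hsucc, if_neg (hj (j + k) (by omega)), ih, pow_succ]; ring
    have hc : 0 < α j / ρ ^ j := div_pos (hpos j) (by positivity)
    obtain ⟨i, hgi, hi1, hi2⟩ := (hgood.and_eventually
      ((ht _ hc).and (eventually_ge_atTop j))).exists
    refine hj i hi2 ⟨hgi, ?_⟩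
    obtain ⟨k, rfl⟩ := Nat.exists_eq_add_of_le hi2
    rw [hgeo]
    refine le_trans (le_of_eq ?_) hi1
    rw [pow_add]; field_simp

/-- Frostman-type conclusion. -/
theorem frostman {K : ℕ} (p : ℕ → PMF (Bk K)) (s : ℝ) (hs : 0 ≤ s) (D : ℝ) (hD : 0 < D)
    (h : ∀ S : Set ℝ, Metric.ediam S ≤ 1 →
      nu p (code ⁻¹' S ∩ supp p) ≤ ENNReal.ofReal D * Metric.ediam S ^ s)
    (E : Set ℝ) (hE : ∀ ω ∈ supp p, code ω ∈ E) : ENNReal.ofReal s ≤ dimH E := by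
  have hD0 : ENNReal.ofReal D ≠ 0 := (ENNReal.ofReal_pos.2 hD).ne'
  have hDt : ENNReal.ofReal D ≠ ⊤ := ENNReal.ofReal_ne_top
  have hle : (ENNReal.ofReal D)⁻¹ • Measure.map code (nu p) ≤ Measure.hausdorffMeasure s := by
    refine Measure.le_hausdorffMeasure s _ 1 one_pos ?_
    intro S hS
    have h1 : Measure.map code (nu p) S ≤ ENNReal.ofReal D * Metric.ediam S ^ s := by
      have h2 := h (closure S) (by rwa [Metric.ediam_closure])
      rw [Metric.ediam_closure] at h2
      refine (measure_mono subset_closure).trans ?_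
      rw [Measure.map_apply code_measurable isClosed_closure.measurableSet]
      refine le_trans ?_ h2
      refine (measure_mono (t := (code ⁻¹' closure S ∩ supp p) ∪ (supp p)ᶜ) ?_).trans
        ((measure_union_le _ _).trans (by rw [nu_supp, add_zero]))
      intro ω hω
      by_cases hs : ω ∈ supp p
      · exact Or.inl ⟨hω, hs⟩
      · exact Or.inr hs
    rw [Measure.smul_apply, smul_eq_mul]
    calc _ ≤ (ENNReal.ofReal D)⁻¹ * (ENNReal.ofReal D * Metric.ediam S ^ s) := by gcongr
      _ = _ := by rw [← mul_assoc, ENNReal.inv_mul_cancel hD0 hDt, one_mul]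
  have hne : Measure.hausdorffMeasure (((s.toNNReal : NNReal) : ℝ)) E ≠ 0 := by
    rw [Real.coe_toNNReal s hs]
    intro h0
    have h1 := (hle E).trans_eq h0
    rw [Measure.smul_apply, smul_eq_mul, nonpos_iff_eq_zero, mul_eq_zero] at h1
    rcases h1 with h1 | h1
    · exact ENNReal.inv_ne_zero.2 hDt h1
    · have h2 : nu p (supp p) ≤ 0 := by
        rw [← h1]
        exact (measure_mono (fun ω hω => hE ω hω)).trans
          (Measure.le_map_apply code_measurable.aemeasurable E)
      have h3 : nu p univ ≤ nu p (supp p) + nu p (supp p)ᶜ := by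
        rw [← union_compl_self (supp p)]; exact measure_union_le _ _
      rw [nu_supp, add_zero, measure_univ] at h3
      exact absurd (h3.trans h2) (by simp)
  exact le_dimH_of_hausdorffMeasure_ne_zero hne

theorem mass_bound {K : ℕ} (p : ℕ → PMF (Bk K)) (big : ℕ → Prop) (H : ℕ → ℕ+) (pA : PMF (Bk K))
    (s ρ C : ℝ) (hs : 1 / 2 ≤ s) (hs1 : s ≤ 1) (hρ0 : 0 < ρ) (hCdef : C = (8 * 2 ^ K) ^ 2)
    (α : ℕ → ℝ) (h0 : α 0 = 1) (hα0 : ∀ i, 0 < α i)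
    (hbigα : ∀ i, big i → α i ≤ (H i : ℝ) ^ (-(3 * s - 1)) ∧ α (i + 1) = C)
    (hnα : ∀ i, ¬ big i → α (i + 1) = α i * ρ)
    (hbig : ∀ i, big i → p i = bigP K (H i)) (hn : ∀ i, ¬ big i → p i = pA)
    (hpA : ∀ w, pA w ≤ ENNReal.ofReal ((cQ (wl w) : ℝ) ^ (-(2 * s)) * (ρ / 4)))
    (ω : ℕ → Bk K) (hω : ω ∈ supp p) (m : ℕ) :
    ∏ i ∈ Finset.range m, p i (ω i) ≤ ENNReal.ofReal (α m * qq ω m ^ (-(2 * s))) := by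
  induction m with
  | zero =>
    have : qq ω 0 = 1 := by simp [qq, pre, cQ_nil]
    rw [h0, this]; simp
  | succ m ih =>
    rw [Finset.prod_range_succ]
    have hq := qq_one_le ω m
    have hq' := qq_one_le ω (m + 1)
    have hQ : (1 : ℝ) ≤ cQ (wl (ω m)) := wq_pos (ω m)
    have hq0 : 0 < qq ω m := by linarith
    have hq'0 : 0 < qq ω (m + 1) := by linarith
    have hsucc := qq_succ_le ω m
    have hαm := hα0 m
    -- `q_m^{-2s} Q^{-2s} ≤ 4 q_{m+1}^{-2s}`
    have key : ∀ Q : ℝ, 0 < Q → qq ω (m + 1) ≤ Q * qq ω m →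
        qq ω m ^ (-(2 * s)) ≤ Q ^ (2 * s) * qq ω (m + 1) ^ (-(2 * s)) := by
      intro Q hQ0 h
      have h1 : (Q * qq ω m) ^ (-(2 * s)) ≤ qq ω (m + 1) ^ (-(2 * s)) :=
        Real.rpow_le_rpow_of_nonpos hq'0 h (by linarith)
      rw [Real.mul_rpow hQ0.le hq0.le, Real.rpow_neg hQ0.le] at h1
      have h2 : 0 < Q ^ (2 * s) := by positivity
      calc qq ω m ^ (-(2 * s)) = Q ^ (2 * s) * ((Q ^ (2 * s))⁻¹ * qq ω m ^ (-(2 * s))) := by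
            field_simp
        _ ≤ _ := by gcongr
    by_cases hb : big m
    · have hwm := hω m
      rw [hbig m hb] at hwm ⊢
      have hmem := mem_of_bigP hwm
      rw [bigP_apply hmem]
      obtain ⟨u, v, hu, hv, e⟩ := mem_bigF.1 hmem
      have hcq := bigW_cQ K u v (H m) hu.2 hv.2
      rw [← e] at hcq
      obtain ⟨hα1, hα2⟩ := hbigα m hb
      have hH : (1 : ℝ) ≤ (H m : ℕ) := by exact_mod_cast (H m).pos
      have hH0 : (0 : ℝ) < (H m : ℕ) := by linarith
      refine (mul_le_mul_left ih _).trans ?_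
      rw [← ENNReal.ofReal_mul (by positivity)]
      apply ENNReal.ofReal_le_ofReal
      rw [hα2]
      have hk := key (8 * 2 ^ K * (H m : ℕ) ^ 2) (by positivity) (by
        refine hsucc.trans ?_
        nlinarith)
      have hpow : (8 * 2 ^ K * ((H m : ℕ) : ℝ) ^ 2) ^ (2 * s) ≤ C * ((H m : ℕ) : ℝ) ^ (4 * s) := by
        rw [Real.mul_rpow (by positivity) (by positivity)]
        have a1 : ((8 : ℝ) * 2 ^ K) ^ (2 * s) ≤ C := by
          rw [hCdef, ← Real.rpow_natCast (8 * 2 ^ K)]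
          apply Real.rpow_le_rpow_of_exponent_le
          · have : (1 : ℝ) ≤ 2 ^ K := one_le_pow₀ (by norm_num)
            linarith
          · push_cast; linarith
        have a2 : (((H m : ℕ) : ℝ) ^ 2) ^ (2 * s) = ((H m : ℕ) : ℝ) ^ (4 * s) := by
          rw [← Real.rpow_natCast ((H m : ℕ) : ℝ), ← Real.rpow_mul hH0.le]
          congr 1; push_cast; ring
        rw [a2]; gcongr
      have hC0 : 0 < C := by rw [hCdef]; positivity
      have hHpow : ((H m : ℕ) : ℝ) ^ (-(3 * s - 1)) * (((H m : ℕ) : ℝ) ^ (4 * s) *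
          (((H m : ℕ) : ℝ) ^ 2)⁻¹) ≤ 1 := by
        rw [← Real.rpow_natCast ((H m : ℕ) : ℝ) 2, ← Real.rpow_neg hH0.le, ← Real.rpow_add hH0,
          ← Real.rpow_add hH0]
        apply Real.rpow_le_one_of_one_le_of_nonpos hH
        push_cast; linarith
      calc α m * qq ω m ^ (-(2 * s)) * (((H m : ℕ) : ℝ) ^ 2)⁻¹
          ≤ ((H m : ℕ) : ℝ) ^ (-(3 * s - 1)) * (C * ((H m : ℕ) : ℝ) ^ (4 * s) *
            qq ω (m + 1) ^ (-(2 * s))) * (((H m : ℕ) : ℝ) ^ 2)⁻¹ := by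
            gcongr
            exact hk.trans (by gcongr)
        _ = C * qq ω (m + 1) ^ (-(2 * s)) * (((H m : ℕ) : ℝ) ^ (-(3 * s - 1)) *
            (((H m : ℕ) : ℝ) ^ (4 * s) * (((H m : ℕ) : ℝ) ^ 2)⁻¹)) := by ring
        _ ≤ C * qq ω (m + 1) ^ (-(2 * s)) * 1 := by gcongr
        _ = _ := mul_one _
    · rw [hn m hb]
      refine (mul_le_mul' ih (hpA (ω m))).trans ?_
      rw [← ENNReal.ofReal_mul (by positivity)]
      apply ENNReal.ofReal_le_ofReal
      rw [hnα m hb]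
      have hk := key (2 * cQ (wl (ω m))) (by positivity) (by linarith)
      have hQ0 : (0 : ℝ) < cQ (wl (ω m)) := by linarith
      have h4 : (2 : ℝ) ^ (2 * s) ≤ 4 := by
        calc (2 : ℝ) ^ (2 * s) ≤ 2 ^ (2 : ℝ) :=
              Real.rpow_le_rpow_of_exponent_le (by norm_num) (by linarith)
          _ = 4 := by norm_num
      rw [Real.mul_rpow (by norm_num) hQ0.le] at hk
      have hcan : (cQ (wl (ω m)) : ℝ) ^ (2 * s) * (cQ (wl (ω m)) : ℝ) ^ (-(2 * s)) = 1 := by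
        rw [← Real.rpow_add hQ0, add_neg_cancel, Real.rpow_zero]
      calc α m * qq ω m ^ (-(2 * s)) * ((cQ (wl (ω m)) : ℝ) ^ (-(2 * s)) * (ρ / 4))
          ≤ α m * ((2 : ℝ) ^ (2 * s) * (cQ (wl (ω m)) : ℝ) ^ (2 * s) * qq ω (m + 1) ^ (-(2 * s))) *
            ((cQ (wl (ω m)) : ℝ) ^ (-(2 * s)) * (ρ / 4)) := by gcongr
        _ = α m * (ρ / 4) * qq ω (m + 1) ^ (-(2 * s)) * (2 : ℝ) ^ (2 * s) *
            ((cQ (wl (ω m)) : ℝ) ^ (2 * s) * (cQ (wl (ω m)) : ℝ) ^ (-(2 * s))) := by ring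
        _ ≤ α m * (ρ / 4) * qq ω (m + 1) ^ (-(2 * s)) * 4 * 1 := by rw [hcan]; gcongr
        _ = _ := by ring

theorem exists_pA (N : ℕ) (s Y : ℝ) (hY : 0 < Y) (h : ENNReal.ofReal (8 * Y) < S N s) :
    ∃ (pA : PMF (Fin N → ℕ+)) (M : ℕ), 1 ≤ M ∧ (∀ w, pA w ≠ 0 → ∀ j, (w j : ℕ) ≤ M) ∧
      ∀ w, pA w ≤ ENNReal.ofReal ((cQ (wl w) : ℝ) ^ (-(2 * s)) * ((Y⁻¹ / 2) / 4)) := by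
  classical
  rw [S, ENNReal.tsum_eq_iSup_sum, lt_iSup_iff] at h
  obtain ⟨A, hA⟩ := h
  set Z := ∑ a ∈ A, ENNReal.ofReal ((cQ (wl a) : ℝ) ^ (-(2 * s))) with hZ
  have hZ0 : Z ≠ 0 := (zero_le.trans_lt hA).ne'
  have hZt : Z ≠ ⊤ := (ENNReal.sum_lt_top.2 (fun _ _ => ENNReal.ofReal_lt_top)).ne
  refine ⟨PMF.ofFinset (fun a => if a ∈ A then ENNReal.ofReal ((cQ (wl a) : ℝ) ^ (-(2 * s))) / Z
    else 0) A ?_ ?_, A.sup (fun a => Finset.univ.sup (fun j => (a j : ℕ))) + 1, by omega, ?_, ?_⟩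
  · rw [Finset.sum_congr rfl (fun a ha => if_pos ha)]
    simp_rw [div_eq_mul_inv]
    rw [← Finset.sum_mul, ENNReal.mul_inv_cancel hZ0 hZt]
  · intro a ha; exact if_neg ha
  · intro w hw j
    rw [PMF.ofFinset_apply] at hw
    have hwA : w ∈ A := by by_contra hcon; exact hw (if_neg hcon)
    have h1 : (w j : ℕ) ≤ Finset.univ.sup (fun j => (w j : ℕ)) :=
      Finset.le_sup (f := fun j => (w j : ℕ)) (Finset.mem_univ j)
    have h2 := Finset.le_sup (f := fun a : Fin N → ℕ+ => Finset.univ.sup (fun j => (a j : ℕ))) hwA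
    omega
  · intro w
    rw [PMF.ofFinset_apply]
    split_ifs with hw
    · have hq := wq_pos w
      have h8 : (0 : ℝ) < 8 * Y := by positivity
      calc ENNReal.ofReal ((cQ (wl w) : ℝ) ^ (-(2 * s))) / Z
          ≤ ENNReal.ofReal ((cQ (wl w) : ℝ) ^ (-(2 * s))) / ENNReal.ofReal (8 * Y) := by
            gcongr
        _ = ENNReal.ofReal ((cQ (wl w) : ℝ) ^ (-(2 * s)) / (8 * Y)) :=
            (ENNReal.ofReal_div_of_pos h8).symm
        _ ≤ _ := by
            apply ENNReal.ofReal_le_ofReal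
            apply le_of_eq; field_simp; norm_num
    · exact zero_le

theorem lower_bound (ψ : ℕ → ℝ) (B : ℝ) (hB : 1 < B)
    (hψ : ∀ b, B < b → ∃ᶠ n : ℕ in atTop, ψ n ≤ b ^ n)
    (s : ℝ) (hs : 1 / 2 ≤ s) (hs1 : s ≤ 1) (hp : ¬ press B s ≤ 0) :
    ENNReal.ofReal s ≤ dimH {x : ℝ | x ∈ Set.Ioo (0 : ℝ) 1 ∧ Irrational x ∧
      {n : ℕ | ∃ k l : ℕ, 1 ≤ k ∧ k ≤ n ∧ 1 ≤ l ∧ l ≤ n ∧ k ≠ l ∧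
        ψ n ≤ (pq x k : ℝ) ∧ ψ n ≤ (pq x l : ℝ)}.Infinite} := by
  have hB0 : 0 < B := by linarith
  obtain ⟨δ, hδ, hfreq⟩ := press_low hB hp
  set B1 := B * Real.exp (δ / 8) with hB1
  have hBB1 : B < B1 := by
    have : 1 < Real.exp (δ / 8) := Real.one_lt_exp_iff.2 (by positivity)
    rw [hB1]; nlinarith
  have hB11 : 1 < B1 := hB.trans hBB1
  have hB10 : 0 < B1 := by linarith
  -- choice of the block length
  have hlarge : ∀ᶠ n : ℕ in atTop, 8 ≤ Real.exp (δ * n * (3 / 4)) := by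
    have h1 : Tendsto (fun n : ℕ => δ * n * (3 / 4)) atTop atTop :=
      (tendsto_natCast_atTop_atTop.const_mul_atTop hδ).atTop_mul_const (by norm_num)
    exact (Real.tendsto_exp_atTop.comp h1).eventually_ge_atTop 8
  obtain ⟨N, hN, hN8, hN2⟩ := (hfreq.and_eventually (hlarge.and (eventually_ge_atTop 2))).exists
  obtain ⟨K, rfl⟩ := Nat.exists_eq_add_of_le' hN2
  set NR : ℝ := ((K + 2 : ℕ) : ℝ) with hNR
  have hNR0 : 0 < NR := by rw [hNR]; positivity
  set Y := B1 ^ (NR * (3 * s - 1)) with hY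
  have hY0 : 0 < Y := by positivity
  have hY1 : 1 ≤ Y := Real.one_le_rpow hB11.le (mul_nonneg hNR0.le (by linarith))
  have hSY : ENNReal.ofReal (8 * Y) < S (K + 2) s := by
    refine lt_of_le_of_lt (ENNReal.ofReal_le_ofReal ?_) hN
    have h1 : Y = B ^ (NR * (3 * s - 1)) * Real.exp (δ / 8 * (NR * (3 * s - 1))) := by
      rw [hY, hB1, Real.mul_rpow hB0.le (Real.exp_pos _).le, ← Real.exp_mul]
    have h2 : Real.exp (δ / 8 * (NR * (3 * s - 1))) ≤ Real.exp (δ * NR * (1 / 4)) := by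
      apply Real.exp_le_exp.2
      have : 0 < δ * NR := by positivity
      nlinarith
    have h3 : Real.exp (δ * NR) = Real.exp (δ * NR * (3 / 4)) * Real.exp (δ * NR * (1 / 4)) := by
      rw [← Real.exp_add]; congr 1; ring
    have h4 : 0 < B ^ (NR * (3 * s - 1)) := by positivity
    rw [h1, h3]
    calc 8 * (B ^ (NR * (3 * s - 1)) * Real.exp (δ / 8 * (NR * (3 * s - 1))))
        ≤ Real.exp (δ * NR * (3 / 4)) * (B ^ (NR * (3 * s - 1)) * Real.exp (δ * NR * (1 / 4))) := by
          gcongr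
      _ = _ := by ring
  obtain ⟨pA, M, hM, hpM, hpA⟩ := exists_pA (K + 2) s Y hY0 hSY
  -- heights
  let H : ℕ → ℕ+ := fun i => ⟨⌈B1 ^ ((K + 2) * (i + 2))⌉₊ + 1, by omega⟩
  have hHdef : ∀ i, (H i : ℕ) = ⌈B1 ^ ((K + 2) * (i + 2))⌉₊ + 1 := fun i => rfl
  have hHge : ∀ i, B1 ^ ((K + 2) * (i + 2)) ≤ (H i : ℕ) := by
    intro i; rw [hHdef]; push_cast
    linarith [Nat.le_ceil (B1 ^ ((K + 2) * (i + 2)))]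
  have hHle : ∀ i, ((H i : ℕ) : ℝ) ≤ 3 * B1 ^ ((K + 2) * (i + 2)) := by
    intro i; rw [hHdef]; push_cast
    have h1 : 1 ≤ B1 ^ ((K + 2) * (i + 2)) := one_le_pow₀ hB11.le
    linarith [Nat.ceil_lt_add_one (show 0 ≤ B1 ^ ((K + 2) * (i + 2)) by positivity)]
  have hH2 : ∀ i, 2 ≤ (H i : ℕ) := by
    intro i; rw [hHdef]
    have : 0 < ⌈B1 ^ ((K + 2) * (i + 2))⌉₊ := Nat.ceil_pos.2 (by positivity)
    omega
  let good : ℕ → Prop := fun i => ∃ n, (K + 2) * (i + 1) ≤ n ∧ n ≤ (K + 2) * (i + 2) ∧ ψ n ≤ B1 ^ n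
  have hgood : ∃ᶠ i in atTop, good i := by
    rw [frequently_atTop]
    intro i0
    obtain ⟨n, hn, hψn⟩ := (frequently_atTop.1 (hψ B1 hBB1)) ((K + 2) * (i0 + 1))
    have h1 : i0 + 1 ≤ n / (K + 2) := by
      rw [Nat.le_div_iff_mul_le (by omega), mul_comm]; exact hn
    refine ⟨n / (K + 2) - 1, by omega, n, ?_, ?_, hψn⟩
    · rw [Nat.sub_add_cancel (by omega)]; exact Nat.mul_div_le n (K + 2)
    · rw [show n / (K + 2) - 1 + 2 = n / (K + 2) + 1 by omega]
      exact (Nat.lt_mul_div_succ n (by omega)).le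
  set ρ := Y⁻¹ / 2 with hρ
  have hρ0 : 0 < ρ := by positivity
  have hρ1 : ρ < 1 := by
    have : Y⁻¹ ≤ 1 := inv_le_one_of_one_le₀ hY1
    rw [hρ]; linarith
  set C : ℝ := (8 * 2 ^ K) ^ 2 with hC
  have hC1 : 1 ≤ C := by
    have : (1 : ℝ) ≤ 2 ^ K := one_le_pow₀ (by norm_num)
    rw [hC]; nlinarith
  let t : ℕ → ℝ := fun i => ((H i : ℕ) : ℝ) ^ (-(3 * s - 1))
  have ht : ∀ c : ℝ, 0 < c → ∀ᶠ i : ℕ in atTop, c * ρ ^ i ≤ t i := by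
    intro c hc
    have hlow : ∀ i : ℕ, (3 : ℝ) ^ (-(3 * s - 1)) * (Y⁻¹) ^ (i + 2) ≤ t i := by
      intro i
      have h1 : (3 * B1 ^ ((K + 2) * (i + 2))) ^ (-(3 * s - 1)) ≤ t i :=
        Real.rpow_le_rpow_of_nonpos (by have := (H i).pos; positivity) (hHle i) (by linarith)
      refine le_trans (le_of_eq ?_) h1
      rw [Real.mul_rpow (by norm_num) (by positivity)]
      congr 1
      rw [pow_mul, ← Real.rpow_natCast (B1 ^ (K + 2)) (i + 2), ← Real.rpow_natCast B1 (K + 2),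
        ← Real.rpow_mul hB10.le, ← Real.rpow_mul hB10.le, hY, ← Real.rpow_neg hB10.le,
        ← Real.rpow_natCast _ (i + 2), ← Real.rpow_mul hB10.le]
      congr 1; rw [← hNR]; ring
    have hlim : Tendsto (fun i : ℕ => c * (1 / 2 : ℝ) ^ i) atTop (nhds (c * 0)) :=
      (tendsto_pow_atTop_nhds_zero_of_lt_one (by norm_num) (by norm_num)).const_mul c
    rw [mul_zero] at hlim
    have hc3 : 0 < (3 : ℝ) ^ (-(3 * s - 1)) * (Y⁻¹) ^ 2 := by positivity
    filter_upwards [hlim.eventually_le_const hc3] with i hi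
    refine le_trans ?_ (hlow i)
    calc c * ρ ^ i = (c * (1 / 2) ^ i) * (Y⁻¹) ^ i := by
          rw [hρ, div_eq_mul_one_div, mul_pow]; ring
      _ ≤ ((3 : ℝ) ^ (-(3 * s - 1)) * (Y⁻¹) ^ 2) * (Y⁻¹) ^ i := by gcongr
      _ = _ := by rw [pow_add]; ring
  obtain ⟨α, big, hα00, hα0, hαC, hbigα, hnα, hbinf⟩ :=
    exists_alpha good hgood t ρ C hρ0 hρ1 hC1 ht
  classical
  let p : ℕ → PMF (Bk K) := fun i => if big i then bigP K (H i) else pA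
  have hpb : ∀ i, big i → p i = bigP K (H i) := fun i hi => if_pos hi
  have hpn : ∀ i, ¬ big i → p i = pA := fun i hi => if_neg hi
  obtain ⟨D, hD, hDh⟩ := holder p big H M hH2 hM
    (fun i hi w hw j => hpM w (by rwa [hpn i hi] at hw) j) hpb s hs hs1 α hα0 C hαC
    (fun i hi => (hbigα i hi).2.1)
    (mass_bound p big H pA s ρ C hs hs1 hρ0 hC α hα00 hα0 (fun i hi => (hbigα i hi).2) hnα hpb hpn
      hpA)
  refine frostman p s (by linarith) D hD hDh _ ?_
  intro ω hω
  refine ⟨cf_mem (dig_pos ω), cf_irrational (dig_pos ω), ?_⟩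
  apply Set.infinite_of_forall_exists_gt
  intro n0
  obtain ⟨i, hi, hbi⟩ := (frequently_atTop.1 hbinf) n0
  obtain ⟨n, hn1, hn2, hψn⟩ := (hbigα i hbi).1
  have hwi := hω i
  rw [hpb i hbi] at hwi
  obtain ⟨u, v, hu, hv, e⟩ := mem_bigF.1 (mem_of_bigP hwi)
  have d0 : dig ω ((K + 2) * i) = (u : ℕ) := by
    have := dig_at ω i 0
    rw [e, bigW_zero] at this
    exact this
  have d1 : dig ω ((K + 2) * i + 1) = (v : ℕ) := by
    have := dig_at ω i 1
    rw [e, bigW_one] at this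
    exact this
  have hψH : ψ n ≤ (H i : ℕ) :=
    (hψn.trans (pow_le_pow_right₀ hB11.le hn2)).trans (hHge i)
  have cu : ((H i : ℕ) : ℝ) ≤ (u : ℕ) := by exact_mod_cast hu.1
  have cv : ((H i : ℕ) : ℝ) ≤ (v : ℕ) := by exact_mod_cast hv.1
  refine ⟨n, ⟨(K + 2) * i + 1, (K + 2) * i + 2, by omega, ?_, by omega, ?_, by omega, ?_, ?_⟩, ?_⟩
  · rw [mul_add] at hn1; omega
  · rw [mul_add] at hn1; omega
  · rw [code, pq_cf (dig_pos ω), d0]; linarith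
  · rw [code, pq_cf (dig_pos ω), d1]; linarith
  · have : i + 1 ≤ (K + 2) * (i + 1) := Nat.le_mul_of_pos_left _ (by omega)
    omega


theorem liminf_facts (ψ : ℕ → ℝ) (hψpos : ∀ n, 0 < ψ n) (B : ℝ) (hB : 1 < B)
    (hlim : Filter.atTop.liminf (fun n : ℕ => Real.log (ψ n) / n) = Real.log B) :
    (∀ b : ℝ, 1 < b → b < B → ∀ᶠ n : ℕ in atTop, b ^ n ≤ ψ n) ∧
    (∀ b : ℝ, B < b → ∃ᶠ n : ℕ in atTop, ψ n ≤ b ^ n) := by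
  rw [Filter.liminf_eq] at hlim
  have hlog : 0 < Real.log B := Real.log_pos hB
  have hne : {a : ℝ | ∀ᶠ n : ℕ in atTop, a ≤ Real.log (ψ n) / n}.Nonempty := by
    by_contra h
    rw [Set.not_nonempty_iff_eq_empty] at h
    rw [h, Real.sSup_empty] at hlim
    linarith
  have hbdd : BddAbove {a : ℝ | ∀ᶠ n : ℕ in atTop, a ≤ Real.log (ψ n) / n} := by
    by_contra h
    rw [Real.sSup_of_not_bddAbove h] at hlim
    linarith
  constructor
  · intro b hb1 hbB
    have hl : Real.log b < Real.log B := Real.log_lt_log (by linarith) hbB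
    rw [← hlim] at hl
    obtain ⟨a, ha, hab⟩ := exists_lt_of_lt_csSup hne hl
    have ha' : ∀ᶠ n : ℕ in atTop, a ≤ Real.log (ψ n) / n := ha
    filter_upwards [ha', eventually_ge_atTop 1] with n hn hn1
    have hn0 : (0 : ℝ) < n := by exact_mod_cast hn1
    have h1 : Real.log b ≤ Real.log (ψ n) / n := hab.le.trans hn
    rw [le_div_iff₀ hn0] at h1
    have h2 : Real.log (b ^ n) ≤ Real.log (ψ n) := by
      rw [Real.log_pow]; linarith
    exact (Real.log_le_log_iff (by positivity) (hψpos n)).1 h2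
  · intro b hbB
    have hl : Real.log B < Real.log b := Real.log_lt_log (by linarith) hbB
    have hnot : ¬ ∀ᶠ n : ℕ in atTop, Real.log b ≤ Real.log (ψ n) / n := by
      intro h
      have := le_csSup hbdd h
      linarith
    rw [Filter.not_eventually] at hnot
    refine (hnot.and_eventually (eventually_ge_atTop 1)).mono ?_
    rintro n ⟨hn, hn1⟩
    have hn0 : (0 : ℝ) < n := by exact_mod_cast hn1
    rw [not_le, div_lt_iff₀ hn0] at hn
    have h2 : Real.log (ψ n) ≤ Real.log (b ^ n) := by
      rw [Real.log_pow]; linarith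
    have hb0 : 0 < b := by linarith
    exact (Real.log_le_log_iff (hψpos n) (by positivity)).1 h2

theorem tan_tian_wang_finite (ψ : ℕ → ℝ) (hψpos : ∀ n, 0 < ψ n) (hψmono : Monotone ψ)
    (B : ℝ) (hB : 1 < B)
    (hlim : Filter.atTop.liminf (fun n : ℕ => Real.log (ψ n) / n) = Real.log B) :
    dimH {x : ℝ | x ∈ Set.Ioo (0 : ℝ) 1 ∧ Irrational x ∧
      {n : ℕ | ∃ k l : ℕ, 1 ≤ k ∧ k ≤ n ∧ 1 ≤ l ∧ l ≤ n ∧ k ≠ l ∧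
        ψ n ≤ (pq x k : ℝ) ∧ ψ n ≤ (pq x l : ℝ)}.Infinite} =
    ENNReal.ofReal (sInf {s : ℝ | 0 ≤ s ∧
      Filter.atTop.limsup (fun n : ℕ =>
        (((n : ℝ)⁻¹ : ℝ) : EReal) * ENNReal.log (∑' a : Fin n → ℕ+,
          ENNReal.ofReal (B ^ (-(n : ℝ) * (3 * s - 1)) *
            ((contQ n fun i => (a i : ℕ)) : ℝ) ^ (-(2 * s))))) ≤ 0}) := by
  change _ = ENNReal.ofReal (sInf {s : ℝ | 0 ≤ s ∧ press B s ≤ 0})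
  obtain ⟨hlow, hup⟩ := liminf_facts ψ hψpos B hB hlim
  set P : Set ℝ := {s : ℝ | 0 ≤ s ∧ press B s ≤ 0} with hP
  have h1P : (1 : ℝ) ∈ P := ⟨zero_le_one, press_one hB⟩
  have hbdd : BddBelow P := ⟨0, fun s hs => hs.1⟩
  have hhalf : ∀ s ∈ P, 1 / 2 < s := by
    intro s hs
    by_contra h
    exact press_half hB (not_lt.1 h) hs.2
  have hszhalf : 1 / 2 ≤ sInf P := le_csInf ⟨1, h1P⟩ (fun s hs => (hhalf s hs).le)
  have hs01 : sInf P ≤ 1 := csInf_le hbdd h1P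
  apply le_antisymm
  · refine ENNReal.le_of_forall_pos_le_add ?_
    intro ε hε _
    obtain ⟨s', hs'P, hs'⟩ := exists_lt_of_csInf_lt ⟨1, h1P⟩
      (show sInf P < sInf P + ε by simpa using hε)
    have h0 := upper_bound ψ hψmono B hB hlow s' (sInf P + ε) (hhalf s' hs'P) hs' hs'P.2
    have hnn : 0 ≤ sInf P := by linarith
    have h2 := dimH_le_of_hausdorffMeasure_ne_top (d := Real.toNNReal (sInf P) + ε) (s := {x : ℝ | x ∈ Set.Ioo (0 : ℝ) 1 ∧ Irrational x ∧
      {n : ℕ | ∃ k l : ℕ, 1 ≤ k ∧ k ≤ n ∧ 1 ≤ l ∧ l ≤ n ∧ k ≠ l ∧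
        ψ n ≤ (pq x k : ℝ) ∧ ψ n ≤ (pq x l : ℝ)}.Infinite}) (by
        rw [NNReal.coe_add, Real.coe_toNNReal _ hnn, h0]
        exact ENNReal.zero_ne_top)
    simpa [ENNReal.ofReal] using h2
  · have hl : ∀ s, 1 / 2 ≤ s → (s = 1 / 2 ∨ s < sInf P) → ENNReal.ofReal s ≤ dimH {x : ℝ | x ∈ Set.Ioo (0 : ℝ) 1 ∧ Irrational x ∧
      {n : ℕ | ∃ k l : ℕ, 1 ≤ k ∧ k ≤ n ∧ 1 ≤ l ∧ l ≤ n ∧ k ≠ l ∧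
        ψ n ≤ (pq x k : ℝ) ∧ ψ n ≤ (pq x l : ℝ)}.Infinite} := by
      intro s hs h
      refine lower_bound ψ B hB hup s hs ?_ ?_
      · rcases h with h | h <;> linarith
      · rcases h with h | h
        · exact press_half hB h.le
        · intro hp
          have := csInf_le hbdd (show s ∈ P from ⟨by linarith, hp⟩)
          linarith
    refine ENNReal.le_of_forall_pos_le_add ?_
    intro ε hε _
    have h3 : ENNReal.ofReal (max (1 / 2) (sInf P - ε)) ≤ _ := hl _ (le_max_left _ _) (by
      rcases le_total (sInf P - ε) (1 / 2) with h | h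
      · left; exact max_eq_left h
      · right
        rw [max_eq_right h]
        have : (0 : ℝ) < ε := by exact_mod_cast hε
        linarith)
    calc ENNReal.ofReal (sInf P) ≤ ENNReal.ofReal (max (1 / 2) (sInf P - ε) + ε) := by
          apply ENNReal.ofReal_le_ofReal
          have := le_max_right (1 / 2) (sInf P - (ε : ℝ))
          linarith
      _ ≤ ENNReal.ofReal (max (1 / 2) (sInf P - ε)) + ENNReal.ofReal ε :=
          ENNReal.ofReal_add_le
      _ ≤ _ := by
          rw [ENNReal.ofReal_coe_nnreal]
          gcongr
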